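/- arXiv:1404.3876 — 4 statements merged into one kernel-verified Lean document; each statement's English description precedes it below -/
import Mathlib

section
/- Let M be a d×n integer matrix of full row rank d all of whose d×d minors lie in {-1,0,1} (a unimodular matrix), and let L = M·Mᵀ. Then the Lebesgue volume of the zonotope Z(M), the Lebesgue volume of the zonotope Z(L), the determinant det(L), and the product λ₁⋯λ_d of the (real) eigenvalues of the symmetric matrix L are all equal; in particular vol Z(M) = vol Z(L). -/
open MeasureTheory

/-- The zonotope generated by a `d × n` real matrix: the image of the unit cube
`[0,1]^n` under the linear map `x ↦ M x`. -/
def zonotope {d n : ℕ} (M : Matrix (Fin d) (Fin n) ℝ) : Set (Fin d → ℝ) :=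
  {y | ∃ x : Fin n → ℝ, (∀ i, x i ∈ Set.Icc (0 : ℝ) 1) ∧ y = M.mulVec x}

/-! A parallelepiped `Z(Q)` with `Q` square has volume `|det Q|`, so the point is that `Z(M)` has
volume `det L`. Centre `Z(M)` at the origin. By its support function, `L t` lies in it if and only
if `2 ⟨s, L t⟩ ≤ ∑ⱼ |(s M)ⱼ|` for every real `s`. On the other hand `t` lies in the Voronoi cell of
`ℤ^d` for the quadratic form `L` if and only if `2 ⟨v, L t⟩ ≤ ∑ⱼ (v M)ⱼ²` for every integral `v`.

The first condition implies the second because `|k| ≤ k²` for integers. Conversely, scale `s` so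
that `|(s M)ⱼ| ≤ 1` and let `σⱼ` be the sign of `(s M)ⱼ`. The polytope of all `u` with every
`(u M)ⱼ` between `0` and `σⱼ` has integral vertices because `M` is unimodular. At a vertex
`(u M)ⱼ² = σⱼ (u M)ⱼ`, so the second condition reads `2 ⟨u, L t⟩ ≤ ∑ⱼ σⱼ (u M)ⱼ` there. This is
linear in `u`, hence holds on the whole polytope, in particular at `s`.

So the centred `Z(M)` is the image under `L` of the Voronoi cell, which is a fundamental domain of
`ℤ^d` and therefore has volume `1`. -/

open Matrix Filter Topology
open scoped Pointwise

section Zonotope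

variable {d n : ℕ} (M : Matrix (Fin d) (Fin n) ℝ)

theorem zonotope_eq_image_Icc : zonotope M = M.mulVecLin '' Set.Icc 0 1 := by
  ext y
  simp only [zonotope, Set.mem_ofPred_eq, Set.mem_image, Set.mem_Icc, Pi.le_def,
    ← forall_and, mulVecLin_apply, eq_comm (a := y), Pi.zero_apply, Pi.one_apply]

theorem isCompact_zonotope : IsCompact (zonotope M) := by
  rw [zonotope_eq_image_Icc]
  exact isCompact_Icc.image M.mulVecLin.continuous_of_finiteDimensional

theorem convex_zonotope : Convex ℝ (zonotope M) := by
  rw [zonotope_eq_image_Icc]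
  exact (convex_Icc _ _).linear_image _

theorem volume_zonotope_square (Q : Matrix (Fin d) (Fin d) ℝ) :
    volume (zonotope Q) = ENNReal.ofReal |Q.det| := by
  rw [zonotope_eq_image_Icc, Measure.addHaar_image_linearMap, ← toLin'_apply',
    LinearMap.det_toLin', Real.volume_Icc_pi]
  simp

theorem exists_mem_zonotope_dotProduct_eq (s : Fin d → ℝ) :
    ∃ y ∈ zonotope M, s ⬝ᵥ y = ∑ j, ((s ᵥ* M) j)⁺ := by
  let x : Fin n → ℝ := fun j => if 0 ≤ (s ᵥ* M) j then 1 else 0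
  refine ⟨M *ᵥ x, ⟨x, fun j => by simp only [x]; split_ifs <;> simp, rfl⟩, ?_⟩
  rw [dotProduct_mulVec]
  refine Finset.sum_congr rfl fun j _ => ?_
  by_cases h : 0 ≤ (s ᵥ* M) j
  · simp [x, h]
  · simp [x, h, posPart_eq_zero.2 (not_le.1 h).le]

/- By Hahn–Banach a compact convex set is cut out by its support function. -/
theorem mem_zonotope_iff {y : Fin d → ℝ} :
    y ∈ zonotope M ↔ ∀ s, s ⬝ᵥ y ≤ ∑ j, ((s ᵥ* M) j)⁺ := by
  constructor
  · rintro ⟨x, hx, rfl⟩ s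
    rw [dotProduct_mulVec]
    refine Finset.sum_le_sum fun j _ => ?_
    calc (s ᵥ* M) j * x j ≤ ((s ᵥ* M) j)⁺ * x j :=
          mul_le_mul_of_nonneg_right (le_posPart _) (hx j).1
      _ ≤ ((s ᵥ* M) j)⁺ := mul_le_of_le_one_right (posPart_nonneg _) (hx j).2
  · contrapose!
    intro hy
    obtain ⟨f, c, hfZ, hfy⟩ := geometric_hahn_banach_closed_point (convex_zonotope M)
      (isCompact_zonotope M).isClosed hy
    obtain ⟨s, hs⟩ := (dotProductEquiv ℝ (Fin d)).surjective f.toLinearMap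
    have hfs (z : Fin d → ℝ) : f z = s ⬝ᵥ z := (LinearMap.congr_fun hs z).symm
    obtain ⟨z, hz, hsz⟩ := exists_mem_zonotope_dotProduct_eq M s
    refine ⟨s, ?_⟩
    rw [← hsz, ← hfs, ← hfs]
    exact (hfZ z hz).trans hfy

theorem add_center_mem_zonotope_iff {y : Fin d → ℝ} :
    y + M *ᵥ (fun _ => 1 / 2) ∈ zonotope M ↔ ∀ s, 2 * (s ⬝ᵥ y) ≤ ∑ j, |(s ᵥ* M) j| := by
  rw [mem_zonotope_iff]
  refine forall_congr' fun s => ?_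
  have posPart_eq (a : ℝ) : a⁺ = a * (1 / 2) + |a| / 2 := by
    linarith [posPart_add_negPart a, posPart_sub_negPart a]
  simp only [dotProduct_add, dotProduct_mulVec s M, posPart_eq, Finset.sum_add_distrib,
    ← Finset.sum_div]
  rw [add_comm, dotProduct, add_le_add_iff_left, le_div_iff₀' two_pos]

end Zonotope

section IntLattice

/-- The standard lattice `ℤ^m` in `ℝ^m`, encoded as the integer span of the standard basis so that
the library's results on `ZSpan` apply to it. -/
def intLattice (m : Type*) [Finite m] : AddSubgroup (m → ℝ) :=
  (Submodule.span ℤ (Set.range (Pi.basisFun ℝ m))).toAddSubgroup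

theorem mem_intLattice_iff {m : Type*} [Finite m] {u : m → ℝ} :
    u ∈ intLattice m ↔ ∃ v : m → ℤ, u = Int.cast ∘ v := by
  refine ((Pi.basisFun ℝ m).mem_span_iff_repr_mem ℤ u).trans ?_
  simp only [Pi.basisFun_repr, algebraMap_int_eq, Set.mem_range, eq_intCast, Classical.skolem,
    funext_iff, Function.comp_apply, eq_comm]

end IntLattice

section Voronoi

variable {m : Type*} [Fintype m] {Q : Matrix m m ℝ} {Λ : AddSubgroup (m → ℝ)}

/-- The Voronoi cell of the origin in the lattice `Λ`: the points to which no lattice point is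
nearer than `0`, distances being measured by the quadratic form `t ↦ t ⬝ᵥ Q *ᵥ t`. -/
def voronoiCell (Q : Matrix m m ℝ) (Λ : AddSubgroup (m → ℝ)) : Set (m → ℝ) :=
  {t | ∀ v ∈ Λ, t ⬝ᵥ Q *ᵥ t ≤ (t - v) ⬝ᵥ Q *ᵥ (t - v)}

theorem mem_voronoiCell_iff (hQ : Q.IsSymm) {t : m → ℝ} :
    t ∈ voronoiCell Q Λ ↔ ∀ v ∈ Λ, 2 * (v ⬝ᵥ Q *ᵥ t) ≤ v ⬝ᵥ Q *ᵥ v := by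
  refine forall₂_congr fun v _ => ?_
  have hsymm : t ⬝ᵥ Q *ᵥ v = v ⬝ᵥ Q *ᵥ t := by
    rw [dotProduct_mulVec, ← mulVec_transpose, hQ.eq, dotProduct_comm]
  simp only [mulVec_sub, dotProduct_sub, sub_dotProduct, hsymm]
  constructor <;> intro h <;> linarith

theorem isClosed_voronoiCell : IsClosed (voronoiCell Q Λ) := by
  simp only [voronoiCell, Set.ofPred_forall]
  exact isClosed_iInter fun v => isClosed_iInter fun _ =>
    isClosed_le (by fun_prop) (by fun_prop)

theorem sq_norm_le_dotProduct_self (y : m → ℝ) : ‖y‖ ^ 2 ≤ y ⬝ᵥ y := by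
  refine (Real.le_sqrt (norm_nonneg y) (by simpa using dotProduct_star_self_nonneg y)).1 ?_
  refine (pi_norm_le_iff_of_nonneg (Real.sqrt_nonneg _)).2 fun i => Real.abs_le_sqrt ?_
  rw [sq]
  exact Finset.single_le_sum (fun j _ => mul_self_nonneg (y j)) (Finset.mem_univ i)

open scoped MatrixOrder in
theorem tendsto_dotProduct_mulVec_cocompact_atTop (hQ : Q.PosDef) :
    Tendsto (fun t => t ⬝ᵥ Q *ᵥ t) (cocompact (m → ℝ)) atTop := by
  classical
  obtain ⟨B, hB, rfl⟩ :=
    CStarAlgebra.isStrictlyPositive_iff_eq_star_mul_self.1 hQ.isStrictlyPositive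
  have hBinj : B.mulVecLin.ker = ⊥ :=
    LinearMap.ker_eq_bot.2 (mulVec_injective_of_isUnit hB)
  have hnorm : Tendsto (fun t => ‖B *ᵥ t‖ ^ 2) (cocompact (m → ℝ)) atTop :=
    (tendsto_pow_atTop two_ne_zero).comp <| tendsto_norm_cocompact_atTop.comp
      (LinearMap.isClosedEmbedding_of_injective hBinj).tendsto_cocompact
  refine tendsto_atTop_mono (fun t => ?_) hnorm
  calc ‖B *ᵥ t‖ ^ 2 ≤ (B *ᵥ t) ⬝ᵥ (B *ᵥ t) := sq_norm_le_dotProduct_self _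
    _ = t ⬝ᵥ (star B * B) *ᵥ t := by
        rw [← mulVec_mulVec, dotProduct_mulVec t, star_eq_conjTranspose,
          conjTranspose_eq_transpose_of_trivial, vecMul_transpose]

theorem exists_sub_mem_voronoiCell (hQ : Q.PosDef) (hΛ : IsDiscrete (Λ : Set (m → ℝ)))
    (t : m → ℝ) : ∃ v ∈ Λ, t - v ∈ voronoiCell Q Λ := by
  have htend : Tendsto (fun v : Λ => (t - v.1) ⬝ᵥ Q *ᵥ (t - v.1)) cofinite atTop :=
    ((tendsto_dotProduct_mulVec_cocompact_atTop hQ).comp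
      (Homeomorph.subLeft t).isClosedEmbedding.tendsto_cocompact).comp
        (Λ.tendsto_coe_cofinite_of_discrete hΛ)
  obtain ⟨v, hv⟩ := htend.exists_forall_le
  refine ⟨v, v.2, fun w hw => ?_⟩
  simpa only [AddSubgroup.coe_add, sub_sub] using hv (v + ⟨w, hw⟩)

theorem volume_setOf_dotProduct_eq {s : m → ℝ} (hs : s ≠ 0) (c : ℝ) :
    volume {t : m → ℝ | s ⬝ᵥ t = c} = 0 := by
  classical
  let ℓ := dotProductEquiv ℝ m s
  have hss : s ⬝ᵥ s ≠ 0 := mt dotProduct_self_eq_zero.1 hs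
  have hset : {t | s ⬝ᵥ t = c} =
      (AffineSubspace.mk' ((c / (s ⬝ᵥ s)) • s) ℓ.ker : Set (m → ℝ)) := by
    ext t
    simp [AffineSubspace.mem_mk', ℓ, sub_eq_zero, hss]
  rw [hset]
  refine Measure.addHaar_affineSubspace _ _ fun htop => ?_
  have hker : ℓ.ker = ⊤ := by
    rw [← AffineSubspace.direction_mk' ((c / (s ⬝ᵥ s)) • s) ℓ.ker, htop,
      AffineSubspace.direction_top]
  exact hss (LinearMap.congr_fun (LinearMap.ker_eq_top.1 hker) s)

/- A point of both `voronoiCell Q Λ` and its translate by `v` is equidistant from `0` and `v`. -/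
theorem voronoiCell_inter_vadd_subset (hQ : Q.IsSymm) {v : m → ℝ} (hv : v ∈ Λ) :
    (v +ᵥ voronoiCell Q Λ) ∩ voronoiCell Q Λ ⊆
      {t | (v ᵥ* Q) ⬝ᵥ t = v ⬝ᵥ Q *ᵥ v / 2} := by
  rintro _ ⟨⟨t, ht, rfl⟩, hvt⟩
  have h₁ := (mem_voronoiCell_iff hQ).1 ht (-v) (neg_mem hv)
  have h₂ := (mem_voronoiCell_iff hQ).1 hvt v hv
  simp only [vadd_eq_add, mulVec_add, mulVec_neg, dotProduct_add, dotProduct_neg,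
    neg_dotProduct] at h₁ h₂
  simp only [Set.mem_ofPred_eq, ← dotProduct_mulVec, vadd_eq_add, mulVec_add, dotProduct_add]
  linarith

theorem isAddFundamentalDomain_voronoiCell (hQ : Q.PosDef) (hΛ : IsDiscrete (Λ : Set (m → ℝ))) :
    IsAddFundamentalDomain Λ (voronoiCell Q Λ) volume := by
  classical
  refine .mk'' isClosed_voronoiCell.nullMeasurableSet ?covers ?disjoint
    fun v => (measurePreserving_vadd v volume).quasiMeasurePreserving
  case covers =>
    refine .of_forall fun t => ?_
    obtain ⟨v, hv, htv⟩ := exists_sub_mem_voronoiCell hQ hΛ t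
    exact ⟨-⟨v, hv⟩, by simpa [AddSubgroup.vadd_def, sub_eq_neg_add] using htv⟩
  case disjoint =>
    intro v hv
    have hvQ : v.1 ᵥ* Q ≠ 0 := fun h =>
      hv (Subtype.ext (vecMul_injective_of_isUnit hQ.isUnit (h.trans (zero_vecMul Q).symm)))
    exact measure_mono_null
      (voronoiCell_inter_vadd_subset (isHermitian_iff_isSymm.1 hQ.isHermitian) v.2)
      (volume_setOf_dotProduct_eq hvQ _)

theorem volume_voronoiCell_intLattice (hQ : Q.PosDef) :
    volume (voronoiCell Q (intLattice m)) = 1 := by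
  have hdiscrete : IsDiscrete (intLattice m : Set (m → ℝ)) :=
    ⟨inferInstanceAs (DiscreteTopology (Submodule.span ℤ (Set.range (Pi.basisFun ℝ m))))⟩
  have : Countable (intLattice m) :=
    inferInstanceAs (Countable (Submodule.span ℤ (Set.range (Pi.basisFun ℝ m))))
  rw [(isAddFundamentalDomain_voronoiCell hQ hdiscrete).measure_eq
    (ZSpan.isAddFundamentalDomain' (Pi.basisFun ℝ m) volume),
    ZSpan.fundamentalDomain_pi_basisFun, Real.volume_pi_Ico]
  simp

end Voronoi

section ExtremePoints

variable {m n : Type*} [Fintype m] {M : Matrix m n ℝ} {α β : n → ℝ} {u s : m → ℝ}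

/- Constraints that are not tight at `u` are strict there, hence survive a small move. -/
theorem eventually_add_smul_mem_preimage_Icc [Finite n] (hu : u ∈ M.vecMulLinear ⁻¹' Set.Icc α β)
    (hs : ∀ j, (u ᵥ* M) j = α j ∨ (u ᵥ* M) j = β j → (s ᵥ* M) j = 0) :
    ∀ᶠ ε in 𝓝 (0 : ℝ), u + ε • s ∈ M.vecMulLinear ⁻¹' Set.Icc α β := by
  simp only [Set.mem_preimage, ← Set.pi_univ_Icc, Set.mem_univ_pi, map_add, map_smul, Pi.add_apply,
    Pi.smul_apply, vecMulLinear_apply, smul_eq_mul] at hu ⊢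
  refine eventually_all.2 fun j => ?_
  by_cases hj : (u ᵥ* M) j = α j ∨ (u ᵥ* M) j = β j
  · simpa only [hs j hj, mul_zero, add_zero] using .of_forall fun _ => hu j
  · push Not at hj
    have hcont : Continuous fun ε : ℝ => (u ᵥ* M) j + ε * (s ᵥ* M) j := by fun_prop
    refine hcont.continuousAt.eventually_mem ?_
    simpa only [zero_mul, add_zero] using
      Icc_mem_nhds ((hu j).1.lt_of_ne hj.1.symm) ((hu j).2.lt_of_ne hj.2)

theorem span_tight_cols_eq_top_of_mem_extremePoints [Finite n]
    (hu : u ∈ (M.vecMulLinear ⁻¹' Set.Icc α β).extremePoints ℝ) :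
    Submodule.span ℝ (M.col '' {j | (u ᵥ* M) j = α j ∨ (u ᵥ* M) j = β j}) = ⊤ := by
  classical
  by_contra hspan
  obtain ⟨ℓ, hℓ, hker⟩ := Submodule.exists_le_ker_of_lt_top _ (lt_top_iff_ne_top.2 hspan)
  obtain ⟨s, rfl⟩ := (dotProductEquiv ℝ m).surjective ℓ
  have hs : s ≠ 0 := by rintro rfl; exact hℓ (map_zero _)
  have htight (j) (hj : (u ᵥ* M) j = α j ∨ (u ᵥ* M) j = β j) : (s ᵥ* M) j = 0 :=
    hker (Submodule.subset_span ⟨j, hj, rfl⟩)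
  have hmove := eventually_add_smul_mem_preimage_Icc hu.1 htight
  have hmoveNeg := (tendsto_neg (0 : ℝ)).eventually (by rwa [neg_zero])
  obtain ⟨ε, ⟨hε, hεneg⟩, hεpos⟩ :=
    (((hmove.and hmoveNeg).filter_mono nhdsWithin_le_nhds).and
      (self_mem_nhdsWithin (s := Set.Ioi 0))).exists
  have hmid : u ∈ openSegment ℝ (u + ε • s) (u + (-ε) • s) :=
    ⟨1 / 2, 1 / 2, by norm_num, by norm_num, by norm_num, by module⟩
  have hεs : ε • s = 0 := by simpa using ((mem_extremePoints.1 hu).2 _ hε _ hεneg hmid).1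
  exact (smul_ne_zero (ne_of_gt hεpos) hs) hεs

end ExtremePoints

section Unimodular

theorem exists_linearIndependent_comp_of_span_eq_top {m κ : Type*} [Finite m] {T : Set κ}
    {c : κ → m → ℝ} (hT : Submodule.span ℝ (c '' T) = ⊤) :
    ∃ f : m → κ, (∀ i, f i ∈ T) ∧ LinearIndependent ℝ (c ∘ f) := by
  let b := Module.Basis.ofSpan hT.ge
  let e := b.indexEquiv (Pi.basisFun ℝ m)
  choose f hfT hf using fun i => Module.Basis.ofSpan_subset hT.ge ⟨e.symm i, rfl⟩
  refine ⟨f, hfT, ?_⟩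
  rw [show c ∘ f = b ∘ e.symm from funext hf]
  exact b.linearIndependent.comp _ e.symm.injective

theorem sign_mul_eq_sq_of_mem_Icc {σ : SignType} {k : ℤ}
    (hk : k ∈ Set.Icc (min 0 (σ : ℤ)) (max 0 (σ : ℤ))) : (σ : ℤ) * k = k ^ 2 := by
  obtain ⟨hmin, hmax⟩ := hk
  cases σ with
  | zero => simp_all [le_antisymm hmax hmin]
  | neg =>
    obtain rfl | rfl : k = -1 ∨ k = 0 := by
      simp only [SignType.neg_eq_neg_one, SignType.coe_neg, SignType.coe_one] at hmin hmax
      lia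
    all_goals simp
  | pos =>
    obtain rfl | rfl : k = 0 ∨ k = 1 := by
      simp only [SignType.pos_eq_one, SignType.coe_one] at hmin hmax
      lia
    all_goals simp

theorem mem_Icc_sign_of_abs_le_one {a : ℝ} (ha : |a| ≤ 1) :
    a ∈ Set.Icc ((min 0 (SignType.sign a : ℤ) : ℤ) : ℝ) (max 0 (SignType.sign a : ℤ) : ℤ) := by
  obtain ⟨hneg, hpos⟩ := abs_le.1 ha
  rcases lt_trichotomy a 0 with h | rfl | h
  · simp [sign_neg h, hneg, h.le]
  · simp
  · simp [sign_pos h, hpos, h.le]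

variable {m n : Type*} [Fintype m] {A : Matrix m n ℤ}

theorem vecMul_map_intCast (v : m → ℤ) (A : Matrix m n ℤ) :
    (Int.cast ∘ v) ᵥ* A.map Int.cast = (Int.cast ∘ (v ᵥ* A) : n → ℝ) :=
  funext fun j => (RingHom.map_vecMul (Int.castRingHom ℝ) A v j).symm

variable [DecidableEq m]

theorem mem_intLattice_of_vecMul_mem_intLattice {B : Matrix m m ℤ} (hB : IsUnit B.det)
    {u : m → ℝ} (hu : u ᵥ* B.map Int.cast ∈ intLattice m) : u ∈ intLattice m := by
  obtain ⟨k, hk⟩ := mem_intLattice_iff.1 hu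
  have hBinv : B.map Int.cast * B⁻¹.map Int.cast = (1 : Matrix m m ℝ) := by
    rw [← Matrix.map_mul_intCast, mul_nonsing_inv B hB]
    simp
  refine mem_intLattice_iff.2 ⟨k ᵥ* B⁻¹, ?_⟩
  rw [← vecMul_map_intCast, ← hk, vecMul_vecMul, hBinv, vecMul_one]

/-- Unimodularity of an integer matrix whose rows are indexed by `m`, in the form meant for matrices
of full row rank: every maximal minor is `-1`, `0` or `1`. -/
def IsUnimodular (A : Matrix m n ℤ) : Prop :=
  ∀ f : m → n, Function.Injective f → (A.submatrix id f).det ∈ ({-1, 0, 1} : Set ℤ)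

namespace IsUnimodular

theorem isUnit_det_submatrix (hA : IsUnimodular A) {f : m → n}
    (hf : LinearIndependent ℝ ((A.map Int.cast : Matrix m n ℝ).col ∘ f)) :
    IsUnit (A.submatrix id f).det := by
  have hunit : IsUnit ((A.submatrix id f).map (Int.cast : ℤ → ℝ)) :=
    linearIndependent_cols_iff_isUnit.1 hf
  have hdet : (A.submatrix id f).det ≠ 0 := by
    have hcast := ((isUnit_iff_isUnit_det _).1 hunit).ne_zero
    rwa [← Int.cast_det, Int.cast_ne_zero] at hcast
  rcases hA f (.of_comp hf.injective) with h | h | h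
  · exact Int.isUnit_iff.2 (.inr h)
  · exact absurd h hdet
  · exact Int.isUnit_iff.2 (.inl h)

theorem mem_intLattice_of_mem_extremePoints [Finite n] (hA : IsUnimodular A) {α β : n → ℤ}
    {u : m → ℝ} (hu : u ∈ ((A.map Int.cast).vecMulLinear ⁻¹'
      Set.Icc (Int.cast ∘ α : n → ℝ) (Int.cast ∘ β)).extremePoints ℝ) :
    u ∈ intLattice m := by
  obtain ⟨f, hftight, hf⟩ := exists_linearIndependent_comp_of_span_eq_top
    (span_tight_cols_eq_top_of_mem_extremePoints hu)
  have hint (i) : ∃ k : ℤ, (u ᵥ* A.map Int.cast) (f i) = k :=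
    (hftight i).elim (fun h => ⟨α (f i), h⟩) fun h => ⟨β (f i), h⟩
  choose k hk using hint
  exact mem_intLattice_of_vecMul_mem_intLattice (hA.isUnit_det_submatrix hf)
    (mem_intLattice_iff.2 ⟨k, funext hk⟩)

theorem dotProduct_le_of_forall_intCast [Finite n] (hA : IsUnimodular A)
    (hinj : Function.Injective fun u : m → ℝ => u ᵥ* A.map Int.cast) {α β : n → ℤ} {w : m → ℝ}
    {c : ℝ} (hw : ∀ v : m → ℤ, v ᵥ* A ∈ Set.Icc α β → w ⬝ᵥ (Int.cast ∘ v) ≤ c) {s : m → ℝ}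
    (hs : s ᵥ* A.map Int.cast ∈ Set.Icc (Int.cast ∘ α : n → ℝ) (Int.cast ∘ β)) :
    w ⬝ᵥ s ≤ c := by
  let P : Set (m → ℝ) :=
    (A.map Int.cast).vecMulLinear ⁻¹' Set.Icc (Int.cast ∘ α : n → ℝ) (Int.cast ∘ β)
  have hPcompact : IsCompact P := (LinearMap.isClosedEmbedding_of_injective
    (LinearMap.ker_eq_bot.2 hinj)).isCompact_preimage isCompact_Icc
  have hPconvex : Convex ℝ P := (convex_Icc _ _).linear_preimage _
  have hextreme : P.extremePoints ℝ ⊆ {u | w ⬝ᵥ u ≤ c} := fun u hu => by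
    obtain ⟨v, rfl⟩ := mem_intLattice_iff.1 (hA.mem_intLattice_of_mem_extremePoints hu)
    have hv := hu.1
    simp only [P, Set.mem_preimage, vecMulLinear_apply, vecMul_map_intCast] at hv
    exact hw v ⟨fun j => Int.cast_le.1 (hv.1 j), fun j => Int.cast_le.1 (hv.2 j)⟩
  have hPsubset : P ⊆ {u | w ⬝ᵥ u ≤ c} := by
    rw [← closure_convexHull_extremePoints hPcompact hPconvex]
    exact closure_minimal
      (convexHull_min hextreme (convex_halfSpace_le (dotProductEquiv ℝ m w).isLinear c))
      (isClosed_le (by fun_prop) continuous_const)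
  exact hPsubset hs

theorem two_mul_dotProduct_le_of_abs_le_one [Fintype n] (hA : IsUnimodular A)
    (hinj : Function.Injective fun u : m → ℝ => u ᵥ* A.map Int.cast) {y : m → ℝ}
    (hy : ∀ v ∈ intLattice m, 2 * (v ⬝ᵥ y) ≤ ∑ j, (v ᵥ* A.map Int.cast) j ^ 2) {s : m → ℝ}
    (hs : ∀ j, |(s ᵥ* A.map Int.cast) j| ≤ 1) :
    2 * (s ⬝ᵥ y) ≤ ∑ j, |(s ᵥ* A.map Int.cast) j| := by
  let σ : n → SignType := fun j => SignType.sign ((s ᵥ* A.map Int.cast) j)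
  let w : m → ℝ := (2 : ℝ) • y - A.map Int.cast *ᵥ fun j => (σ j : ℝ)
  have hw (u : m → ℝ) :
      w ⬝ᵥ u = 2 * (u ⬝ᵥ y) - ∑ j, (σ j : ℝ) * (u ᵥ* A.map Int.cast) j := by
    rw [dotProduct_comm, dotProduct_sub, dotProduct_smul, dotProduct_mulVec, smul_eq_mul]
    simp only [dotProduct, mul_comm]
  have hws : w ⬝ᵥ s ≤ 0 := by
    refine hA.dotProduct_le_of_forall_intCast hinj
      (α := fun j => min 0 (σ j : ℤ)) (β := fun j => max 0 (σ j : ℤ)) (fun v hv => ?_)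
      ⟨fun j => (mem_Icc_sign_of_abs_le_one (hs j)).1,
        fun j => (mem_Icc_sign_of_abs_le_one (hs j)).2⟩
    have hsum : ∑ j, (σ j : ℝ) * (v ᵥ* A) j = ∑ j, ((v ᵥ* A) j : ℝ) ^ 2 :=
      Finset.sum_congr rfl fun j _ => by
        exact_mod_cast sign_mul_eq_sq_of_mem_Icc ⟨hv.1 j, hv.2 j⟩
    have hyv := hy _ (mem_intLattice_iff.2 ⟨v, rfl⟩)
    rw [vecMul_map_intCast] at hyv
    rw [hw, sub_nonpos, vecMul_map_intCast]
    exact hyv.trans_eq hsum.symm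
  rw [hw, sub_nonpos] at hws
  simpa only [σ, sign_mul_self] using hws

theorem two_mul_dotProduct_le_sum_abs [Fintype n] (hA : IsUnimodular A)
    (hinj : Function.Injective fun u : m → ℝ => u ᵥ* A.map Int.cast) {y : m → ℝ}
    (hy : ∀ v ∈ intLattice m, 2 * (v ⬝ᵥ y) ≤ ∑ j, (v ᵥ* A.map Int.cast) j ^ 2) (s : m → ℝ) :
    2 * (s ⬝ᵥ y) ≤ ∑ j, |(s ᵥ* A.map Int.cast) j| := by
  set M : Matrix m n ℝ := A.map Int.cast
  let c : ℝ := ‖s ᵥ* M‖ + 1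
  have hc : 0 < c := by positivity
  have hscaled (j) : |((c⁻¹ • s) ᵥ* M) j| = c⁻¹ * |(s ᵥ* M) j| := by
    rw [smul_vecMul, Pi.smul_apply, smul_eq_mul, abs_mul, abs_of_pos (inv_pos.2 hc)]
  have hle := hA.two_mul_dotProduct_le_of_abs_le_one hinj hy (s := c⁻¹ • s) fun j => by
    rw [hscaled, inv_mul_le_one₀ hc]
    exact (norm_le_pi_norm (s ᵥ* M) j).trans (le_add_of_nonneg_right zero_le_one)
  change _ ≤ ∑ j, |((c⁻¹ • s) ᵥ* M) j| at hle
  simp only [hscaled, ← Finset.mul_sum, smul_dotProduct, smul_eq_mul] at hle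
  rw [mul_left_comm] at hle
  exact le_of_mul_le_mul_left hle (inv_pos.2 hc)

end IsUnimodular

end Unimodular

section VolumeZonotope

theorem dotProduct_mul_transpose_mulVec_self {m n : Type*} [Fintype m] [Fintype n]
    (M : Matrix m n ℝ) (v : m → ℝ) :
    v ⬝ᵥ (M * Mᵀ) *ᵥ v = ∑ j, (v ᵥ* M) j ^ 2 := by
  rw [← mulVec_mulVec, dotProduct_mulVec, mulVec_transpose]
  simp only [dotProduct, sq]

theorem posDef_mul_transpose_self {m n : Type*} [Fintype m] [Fintype n] {M : Matrix m n ℝ}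
    (hinj : Function.Injective fun u : m → ℝ => u ᵥ* M) : (M * Mᵀ).PosDef := by
  simpa only [conjTranspose_eq_transpose_of_trivial] using PosDef.mul_conjTranspose_self M hinj

variable {d n : ℕ} {A : Matrix (Fin d) (Fin n) ℤ} {M : Matrix (Fin d) (Fin n) ℝ}

theorem IsUnimodular.add_center_mem_zonotope_iff_mem_voronoiCell (hA : IsUnimodular A)
    (hM : M = A.map Int.cast) (hinj : Function.Injective fun u : Fin d → ℝ => u ᵥ* M)
    (t : Fin d → ℝ) :
    (M * Mᵀ) *ᵥ t + M *ᵥ (fun _ => 1 / 2) ∈ zonotope M ↔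
      t ∈ voronoiCell (M * Mᵀ) (intLattice (Fin d)) := by
  have hsymm : (M * Mᵀ).IsSymm := by rw [IsSymm, transpose_mul, transpose_transpose]
  rw [add_center_mem_zonotope_iff, mem_voronoiCell_iff hsymm]
  simp only [dotProduct_mul_transpose_mulVec_self]
  subst hM
  refine ⟨fun h v hv => (h v).trans (Finset.sum_le_sum fun j _ => ?_),
    hA.two_mul_dotProduct_le_sum_abs hinj⟩
  obtain ⟨v, rfl⟩ := mem_intLattice_iff.1 hv
  have hsq (k : ℤ) : |k| ≤ k ^ 2 := by
    simpa only [Int.natCast_natAbs, sq_abs] using Int.natAbs_le_self_sq k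
  rw [vecMul_map_intCast, Function.comp_apply]
  exact_mod_cast hsq ((v ᵥ* A) j)

theorem IsUnimodular.volume_zonotope (hA : IsUnimodular A) (hM : M = A.map Int.cast)
    (hinj : Function.Injective fun u : Fin d → ℝ => u ᵥ* M) :
    volume (zonotope M) = ENNReal.ofReal (M * Mᵀ).det := by
  have hL := posDef_mul_transpose_self hinj
  let c := M *ᵥ fun _ => 1 / 2
  have hsurj : Function.Surjective (M * Mᵀ).mulVecLin :=
    mulVec_surjective_iff_isUnit.2 hL.isUnit
  have hpre : voronoiCell (M * Mᵀ) (intLattice (Fin d)) =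
      (M * Mᵀ).mulVecLin ⁻¹' ((· + c) ⁻¹' zonotope M) :=
    Set.ext fun t => (hA.add_center_mem_zonotope_iff_mem_voronoiCell hM hinj t).symm
  calc volume (zonotope M) = volume ((· + c) ⁻¹' zonotope M) :=
        (measure_preimage_add_right volume c _).symm
    _ = volume ((M * Mᵀ).mulVecLin '' voronoiCell (M * Mᵀ) (intLattice (Fin d))) := by
        rw [hpre, Set.image_preimage_eq _ hsurj]
    _ = ENNReal.ofReal (M * Mᵀ).det := by
        rw [Measure.addHaar_image_linearMap, volume_voronoiCell_intLattice hL, mul_one,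
          ← toLin'_apply', LinearMap.det_toLin', abs_of_pos hL.det_pos]

end VolumeZonotope

/-- **Polyhedral matroid matrix tree theorem (full rank case).**
For a full row rank unimodular integer matrix `M` with `L = M Mᵀ`, the Lebesgue
volume of `Z(M)`, the volume of `Z(L)`, `det L`, and the product of the (real)
eigenvalues of the symmetric matrix `L` all coincide. -/
theorem stmt0 (d n : ℕ) (M : Matrix (Fin d) (Fin n) ℝ)
    (hint : ∀ i j, ∃ z : ℤ, M i j = (z : ℝ))
    (hrank : M.rank = d)
    (huni : ∀ f : Fin d → Fin n, Function.Injective f →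
      (M.submatrix id f).det ∈ ({-1, 0, 1} : Set ℝ))
    (L : Matrix (Fin d) (Fin d) ℝ) (hLdef : L = M * M.transpose)
    (hL : L.IsHermitian) :
    volume (zonotope M) = volume (zonotope L) ∧
    volume (zonotope L) = ENNReal.ofReal L.det ∧
    L.det = ∏ i, hL.eigenvalues i := by
  subst hLdef
  choose a ha using hint
  have hM : M = (Matrix.of a).map Int.cast := Matrix.ext ha
  have hA : IsUnimodular (Matrix.of a) := fun f hf => by
    have hminor := huni f hf
    rw [hM, submatrix_map, ← Int.cast_det] at hminor
    simp only [Set.mem_insert_iff, Set.mem_singleton_iff] at hminor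
    exact_mod_cast hminor
  have hinj : Function.Injective fun u : Fin d → ℝ => u ᵥ* M :=
    vecMul_injective_iff.2 (linearIndependent_iff_card_eq_finrank_span.2 (by
      rw [Fintype.card_fin, Set.finrank, ← rank_eq_finrank_span_row, hrank]))
  have hvolM := hA.volume_zonotope hM hinj
  have hvolL : volume (zonotope (M * Mᵀ)) = ENNReal.ofReal (M * Mᵀ).det := by
    rw [volume_zonotope_square, abs_of_pos (posDef_mul_transpose_self hinj).det_pos]
  exact ⟨hvolM.trans hvolL.symm, hvolL, by simpa using hL.det_eq_prod_eigenvalues⟩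
end

section
/- Let G be a connected simple graph on n vertices with exactly s spanning trees, and let L be the Laplacian matrix of G, with nonzero eigenvalues λ₁, …, λ_{n-1} (counted with multiplicity). Then λ₁⋯λ_{n-1} = n·s. -/
/-!
By the spectral theorem, the product of the nonzero eigenvalues of a Hermitian matrix whose kernel
is a line is the trace of its adjugate, so it suffices that every diagonal cofactor of the
Laplacian counts the spanning trees. Expanding the cofactor at `r` multilinearly along the rows
`∑_{w ~ v} (e_v - e_w)` gives a sum over the maps `f` choosing a neighbour `f v` of each `v ≠ r`.
The summand is `1` if iterating `f` leads every vertex to `r`, and `0` otherwise, since then the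
vertices that never reach `r` carry a kernel vector. The maps of the first kind correspond to the
spanning trees, `f v` being the neighbour of `v` on the tree path to `r`.
-/

open Matrix Finset

section FlowsTo

variable {α : Type*} {f : α → α} {r : α}

/-- Iterating `f` leads every point to `r`: the functional digraph of `f`, without the edge leaving
`r`, is a tree directed towards `r`. -/
def FlowsTo (f : α → α) (r : α) : Prop := ∀ v, ∃ k, f^[k] v = r

theorem FlowsTo.induction {P : α → Prop} (h : FlowsTo f r) (root : P r)
    (step : ∀ v ≠ r, P (f v) → P v) (v : α) : P v := by
  obtain ⟨k, hk⟩ := h v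
  induction k generalizing v with
  | zero => exact (show v = r from hk) ▸ root
  | succ k ih =>
    by_cases hv : v = r
    · exact hv ▸ root
    · exact step v hv (ih (f v) hk)

theorem flowsTo_iff_exists_rank :
    FlowsTo f r ↔ ∃ d : α → ℕ, ∀ v ≠ r, d (f v) < d v := by
  classical
  constructor
  · intro h
    refine ⟨fun v ↦ Nat.find (h v), fun v hv ↦ ?_⟩
    obtain ⟨k, hk⟩ : ∃ k, Nat.find (h v) = k + 1 :=
      Nat.exists_eq_succ_of_ne_zero fun h₀ ↦ hv ((Nat.find_eq_zero (h v)).1 h₀)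
    have hk_iterate : f^[k] (f v) = r := by
      rw [← Function.iterate_succ_apply, Nat.succ_eq_add_one, ← hk]
      exact Nat.find_spec (h v)
    calc
      Nat.find (h (f v)) < k + 1 := Nat.lt_succ_of_le (Nat.find_min' _ hk_iterate)
      _ = Nat.find (h v) := hk.symm
  · rintro ⟨d, hd⟩ v
    induction v using (measure d).wf.induction with
    | _ v ih =>
      by_cases hv : v = r
      · exact ⟨0, hv⟩
      · obtain ⟨k, hk⟩ := ih (f v) (hd v hv)
        exact ⟨k + 1, hk⟩

theorem exists_iterate_apply_eq_iff (hr : f r = r) (v : α) :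
    (∃ k, f^[k] (f v) = r) ↔ ∃ k, f^[k] v = r := by
  constructor
  · rintro ⟨k, hk⟩
    exact ⟨k + 1, hk⟩
  · rintro ⟨k, hk⟩
    exact ⟨k, by rw [← Function.iterate_succ_apply, Function.iterate_succ_apply', hk, hr]⟩

end FlowsTo

section GroundedLaplacian

variable {V : Type*} [DecidableEq V] (R : Type*) {f : V → V} {r : V}

/-- The Laplacian `1 - N` of the functional digraph of `f`, where `N v w = 1` if `f v = w` and
`N v w = 0` otherwise, grounded at `r`: row `r` is replaced by the basis vector `e_r`. -/
def groundedLaplacian [Ring R] (r : V) (f : V → V) : Matrix V V R :=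
  of fun v ↦ if v = r then Pi.single r 1 else Pi.single v 1 - Pi.single (f v) 1

theorem groundedLaplacian_root [Ring R] (r : V) (f : V → V) :
    groundedLaplacian R r f r = Pi.single r 1 :=
  if_pos rfl

theorem groundedLaplacian_of_ne [Ring R] (f : V → V) {v : V} (hv : v ≠ r) :
    groundedLaplacian R r f v = Pi.single v 1 - Pi.single (f v) 1 :=
  if_neg hv

variable [Fintype V] [CommRing R]

theorem det_groundedLaplacian_of_flowsTo (h : FlowsTo f r) :
    (groundedLaplacian R r f).det = 1 := by
  obtain ⟨d, hd⟩ := flowsTo_iff_exists_rank.1 h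
  have apply_of_le : ∀ v w, d v ≤ d w →
      groundedLaplacian R r f v w = (1 : Matrix V V R) v w := by
    intro v w hvw
    rw [one_eq_pi_single]
    by_cases hv : v = r
    · rw [hv, groundedLaplacian_root]
    · have hw : w ≠ f v := fun hw ↦ (hd v hv).not_ge (hw ▸ hvw)
      rw [groundedLaplacian_of_ne R f hv, Pi.sub_apply, Pi.single_eq_of_ne hw, sub_zero]
  have triangular : (groundedLaplacian R r f).BlockTriangular (OrderDual.toDual ∘ d) := by
    intro v w hvw
    have hlt : d v < d w := hvw
    rw [apply_of_le v w hlt.le, one_apply_ne (ne_of_apply_ne d hlt.ne)]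
  rw [triangular.det]
  refine prod_eq_one fun a _ ↦ ?_
  have block : (groundedLaplacian R r f).toSquareBlock (OrderDual.toDual ∘ d) a = 1 := by
    ext v w
    have hvw : d v = d w := v.2.trans w.2.symm
    rw [toSquareBlock_def, of_apply, apply_of_le _ _ hvw.le, one_apply, one_apply]
    simp only [Subtype.ext_iff]
  rw [block, det_one]

theorem det_groundedLaplacian_of_not_flowsTo (hr : f r = r) (h : ¬ FlowsTo f r) :
    (groundedLaplacian R r f).det = 0 := by
  classical
  let x : V → R := fun v ↦ if ∃ k, f^[k] v = r then 0 else 1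
  obtain ⟨v₀, hv₀⟩ : ∃ v, ¬ ∃ k, f^[k] v = r := not_forall.1 h
  have hx₀ : x v₀ = 1 := if_neg hv₀
  have hxr : x r = 0 := if_pos ⟨0, rfl⟩
  have hxf : ∀ v, x (f v) = x v := fun v ↦ by
    simp only [x, exists_iterate_apply_eq_iff hr]
  refine det_eq_zero_of_mulVec_eq_zero_of_mem_nonZeroDivisors (v := x) (i := v₀)
    ?_ (hx₀ ▸ one_mem _)
  ext v
  by_cases hv : v = r
  · rw [hv, mulVec, groundedLaplacian_root, single_one_dotProduct, hxr, Pi.zero_apply]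
  · rw [mulVec, groundedLaplacian_of_ne R f hv, sub_dotProduct, single_one_dotProduct,
      single_one_dotProduct, hxf, sub_self, Pi.zero_apply]

end GroundedLaplacian

section SpanningTrees

variable {V : Type*} {G : SimpleGraph V} {r : V} {f g : V → V}

/-- The edge sets of the spanning trees of `G`. -/
def spanningTrees (G : SimpleGraph V) : Set (Finset (Sym2 V)) :=
  {T | (T : Set (Sym2 V)) ⊆ G.edgeSet ∧ (SimpleGraph.fromEdgeSet (T : Set (Sym2 V))).IsTree}

theorem edgeSet_fromEdgeSet_of_subset_edgeSet {T : Set (Sym2 V)} (hT : T ⊆ G.edgeSet) :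
    (SimpleGraph.fromEdgeSet T).edgeSet = T := by
  rw [SimpleGraph.edgeSet_fromEdgeSet, sdiff_eq_left]
  exact Set.disjoint_left.2 fun e he ↦ G.not_isDiag_of_mem_edgeSet (hT he)

theorem eq_of_subset_of_mem_spanningTrees {S T : Finset (Sym2 V)} (hS : S ∈ spanningTrees G)
    (hT : T ∈ spanningTrees G) (hST : S ⊆ T) : S = T := by
  have minimal := SimpleGraph.isTree_iff_minimal_connected.1 hT.2
  have graph_eq :=
    minimal.eq_of_le hS.2.connected (SimpleGraph.fromEdgeSet_mono (coe_subset.2 hST))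
  apply coe_injective
  rw [← edgeSet_fromEdgeSet_of_subset_edgeSet hS.1, ← edgeSet_fromEdgeSet_of_subset_edgeSet hT.1,
    graph_eq]

/-- `f` fixes `r` and sends every other vertex to one of its neighbours in `G`. Such maps index the
multilinear expansion of the cofactor of the Laplacian at `r`. -/
structure IsNeighborMap (G : SimpleGraph V) (r : V) (f : V → V) : Prop where
  map_root : f r = r
  adj : ∀ v ≠ r, G.Adj v (f v)

theorem IsNeighborMap.mono {H : SimpleGraph V} (h : IsNeighborMap H r f) (hle : H ≤ G) :
    IsNeighborMap G r f :=
  ⟨h.map_root, fun v hv ↦ hle (h.adj v hv)⟩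

theorem exists_isNeighborMap_flowsTo (hG : G.Connected) (r : V) :
    ∃ f, IsNeighborMap G r f ∧ FlowsTo f r := by
  classical
  have exists_closer : ∀ v ≠ r, ∃ w, G.Adj v w ∧ G.dist w r < G.dist v r := by
    intro v hv
    obtain ⟨p, hp⟩ := hG.exists_walk_length_eq_dist v r
    cases p with
    | nil => exact absurd rfl hv
    | cons hadj q =>
      refine ⟨_, hadj, ?_⟩
      rw [← hp, SimpleGraph.Walk.length_cons]
      exact Nat.lt_succ_of_le (SimpleGraph.dist_le q)
  choose! next hadj hdist using exists_closer
  refine ⟨Function.update next r r, ⟨Function.update_self .., fun v hv ↦ ?_⟩,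
    flowsTo_iff_exists_rank.2 ⟨fun v ↦ G.dist v r, fun v hv ↦ ?_⟩⟩
  · rw [Function.update_of_ne hv]
    exact hadj v hv
  · rw [Function.update_of_ne hv]
    exact hdist v hv

variable [Fintype V] [DecidableEq V]

/-- The edges `{v, f v}` with `v ≠ r`: the spanning tree in which `f v` is the parent of `v`, when
`f` flows to `r`. -/
def parentEdges (r : V) (f : V → V) : Finset (Sym2 V) := (univ.erase r).image fun v ↦ s(v, f v)

theorem mem_parentEdges {e : Sym2 V} : e ∈ parentEdges r f ↔ ∃ v ≠ r, s(v, f v) = e := by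
  simp [parentEdges]

theorem card_parentEdges_lt (r : V) (f : V → V) : (parentEdges r f).card < Fintype.card V :=
  card_image_le.trans_lt (card_erase_lt_of_mem (mem_univ r))

theorem FlowsTo.connected_parentEdges (h : FlowsTo f r) :
    (SimpleGraph.fromEdgeSet (parentEdges r f : Set (Sym2 V))).Connected := by
  refine (SimpleGraph.connected_iff_exists_forall_reachable _).2 ⟨r, ?_⟩
  refine h.induction .rfl fun v hv reachable_parent ↦ ?_
  by_cases hfv : f v = v
  · exact hfv ▸ reachable_parent
  · refine reachable_parent.trans (SimpleGraph.Adj.reachable ?_).symm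
    exact (SimpleGraph.fromEdgeSet_adj _).2 ⟨mem_parentEdges.2 ⟨v, hv, rfl⟩, Ne.symm hfv⟩

theorem FlowsTo.isTree_parentEdges (h : FlowsTo f r) :
    (SimpleGraph.fromEdgeSet (parentEdges r f : Set (Sym2 V))).IsTree := by
  have connected := h.connected_parentEdges
  have card_edgeSet_le :
      Nat.card (SimpleGraph.fromEdgeSet (parentEdges r f : Set (Sym2 V))).edgeSet ≤
        (parentEdges r f).card := by
    rw [Nat.card_coe_set_eq, ← Set.ncard_coe_finset, SimpleGraph.edgeSet_fromEdgeSet]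
    exact Set.ncard_le_ncard Set.sdiff_subset (finite_toSet _)
  refine SimpleGraph.isTree_iff_connected_and_card.2 ⟨connected, le_antisymm ?_
    connected.card_vert_le_card_edgeSet_add_one⟩
  rw [Nat.card_eq_fintype_card (α := V)]
  exact (Nat.succ_le_succ card_edgeSet_le).trans (card_parentEdges_lt r f)

theorem IsNeighborMap.parentEdges_mem_spanningTrees (h : IsNeighborMap G r f)
    (hf : FlowsTo f r) : parentEdges r f ∈ spanningTrees G := by
  refine ⟨fun e he ↦ ?_, hf.isTree_parentEdges⟩
  obtain ⟨v, hv, rfl⟩ := mem_parentEdges.1 he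
  exact h.adj v hv

theorem FlowsTo.apply_eq_of_parentEdges_subset (h : FlowsTo f r)
    (hfg : parentEdges r f ⊆ parentEdges r g) : ∀ v ≠ r, f v = g v := by
  obtain ⟨d, hd⟩ := flowsTo_iff_exists_rank.1 h
  refine h.induction (P := fun v ↦ v ≠ r → f v = g v) (absurd rfl) fun v hv ih _ ↦ ?_
  obtain ⟨w, hw, hwv⟩ := mem_parentEdges.1 (hfg (mem_parentEdges.2 ⟨v, hv, rfl⟩))
  rcases Sym2.eq_iff.1 hwv with ⟨rfl, hgw⟩ | ⟨rfl, hgw⟩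
  · exact hgw.symm
  · have two_cycle : f (f v) = v := (ih hw).trans hgw
    have := hd v hv
    have := hd (f v) hw
    rw [two_cycle] at this
    omega

theorem bijOn_parentEdges_spanningTrees (G : SimpleGraph V) (r : V) :
    Set.BijOn (parentEdges r) {f | IsNeighborMap G r f ∧ FlowsTo f r} (spanningTrees G) := by
  refine ⟨fun f hf ↦ hf.1.parentEdges_mem_spanningTrees hf.2, fun f hf g hg heq ↦ ?_,
    fun T hT ↦ ?_⟩
  · ext v
    by_cases hv : v = r
    · rw [hv, hf.1.map_root, hg.1.map_root]
    · exact hf.2.apply_eq_of_parentEdges_subset heq.subset v hv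
  · obtain ⟨f, neighbor, flows⟩ := exists_isNeighborMap_flowsTo hT.2.connected r
    have neighbor_G : IsNeighborMap G r f :=
      neighbor.mono ((SimpleGraph.fromEdgeSet_le G).2 (Set.sdiff_subset.trans hT.1))
    refine ⟨f, ⟨neighbor_G, flows⟩, eq_of_subset_of_mem_spanningTrees
      (neighbor_G.parentEdges_mem_spanningTrees flows) hT fun e he ↦ ?_⟩
    obtain ⟨v, hv, rfl⟩ := mem_parentEdges.1 he
    exact ((SimpleGraph.fromEdgeSet_adj _).1 (neighbor.adj v hv)).1

end SpanningTrees

section Laplacian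

variable {V : Type*} [Fintype V] [DecidableEq V] (G : SimpleGraph V) [DecidableRel G.Adj]

theorem mem_piFinset_iff_isNeighborMap {r : V} {f : V → V} :
    f ∈ Fintype.piFinset (fun v ↦ if v = r then {r} else G.neighborFinset v) ↔
      IsNeighborMap G r f := by
  rw [Fintype.mem_piFinset]
  refine ⟨fun h ↦ ⟨by simpa using h r, fun v hv ↦ by simpa [hv] using h v⟩, fun h v ↦ ?_⟩
  by_cases hv : v = r
  · simp [hv, h.map_root]
  · simpa [hv] using h.adj v hv

theorem lapMatrix_apply_eq_sum_neighborFinset (R : Type*) [Ring R] (v : V) :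
    G.lapMatrix R v = ∑ w ∈ G.neighborFinset v, (Pi.single v 1 - Pi.single w 1 : V → R) := by
  ext w
  simp [SimpleGraph.lapMatrix, SimpleGraph.degMatrix, diagonal_apply, SimpleGraph.adjMatrix_apply,
    Finset.sum_apply, Pi.single_apply, eq_comm]

variable (R : Type*) [CommRing R]

open scoped Classical in
theorem adjugate_lapMatrix_apply_self_eq_sum (r : V) :
    (G.lapMatrix R).adjugate r r =
      ∑ f with IsNeighborMap G r f, (groundedLaplacian R r f).det := by
  have rows : (G.lapMatrix R).updateRow r (Pi.single r 1) =
      fun v ↦ ∑ w ∈ if v = r then {r} else G.neighborFinset v,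
        (if v = r then Pi.single r 1 else Pi.single v 1 - Pi.single w 1 : V → R) := by
    funext v
    by_cases hv : v = r
    · simp [hv, updateRow_self]
    · simp only [hv, if_false]
      exact (updateRow_ne hv).trans (lapMatrix_apply_eq_sum_neighborFinset G R v)
  have index : univ.filter (IsNeighborMap G r) =
      Fintype.piFinset fun v ↦ if v = r then {r} else G.neighborFinset v := by
    ext f
    rw [mem_filter_univ, mem_piFinset_iff_isNeighborMap]
  rw [adjugate_apply, rows, index]
  exact (detRowAlternating (n := V) (R := R)).toMultilinearMap.map_sum_finset _ _

theorem adjugate_lapMatrix_apply_self_eq_ncard_spanningTrees (r : V) :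
    (G.lapMatrix R).adjugate r r = (spanningTrees G).ncard := by
  classical
  have det_eq : ∀ f ∈ univ.filter (IsNeighborMap G r),
      (groundedLaplacian R r f).det = if FlowsTo f r then 1 else 0 := by
    intro f hf
    split_ifs with h
    · exact det_groundedLaplacian_of_flowsTo R h
    · exact det_groundedLaplacian_of_not_flowsTo R (mem_filter.1 hf).2.map_root h
  rw [adjugate_lapMatrix_apply_self_eq_sum, sum_congr rfl det_eq, sum_boole, filter_filter,
    ← (bijOn_parentEdges_spanningTrees G r).ncard_eq, ← Set.ncard_coe_finset, coe_filter_univ]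

theorem rank_lapMatrix_add_card_connectedComponent :
    (G.lapMatrix ℝ).rank + Nat.card G.ConnectedComponent = Fintype.card V := by
  classical
  rw [Nat.card_eq_fintype_card, G.card_connectedComponent_eq_finrank_ker_toLin'_lapMatrix,
    Matrix.rank, ← toLin'_apply', LinearMap.finrank_range_add_finrank_ker, Module.finrank_pi]

end Laplacian

section Spectral

variable {n : Type*} [Fintype n] [DecidableEq n]

theorem trace_adjugate_units_conj {R : Type*} [CommRing R] (P : (Matrix n n R)ˣ)
    (A : Matrix n n R) : (P.val * A * P⁻¹.val).adjugate.trace = A.adjugate.trace := by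
  rw [adjugate_mul_distrib, adjugate_mul_distrib, ← mul_assoc, trace_mul_comm, ← mul_assoc,
    ← adjugate_mul_distrib, P.inv_mul, adjugate_one, one_mul]

variable {𝕜 : Type*} [RCLike 𝕜] {A : Matrix n n 𝕜}

theorem trace_adjugate_eq_sum_prod_eigenvalues (hA : A.IsHermitian) :
    A.adjugate.trace = ∑ i, ∏ j ∈ univ.erase i, (hA.eigenvalues j : 𝕜) := by
  conv_lhs => rw [hA.spectral_theorem, Unitary.conjStarAlgAut_apply]
  refine (trace_adjugate_units_conj (Unitary.toUnits hA.eigenvectorUnitary) _).trans ?_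
  simp [adjugate_diagonal, Matrix.trace]

theorem exists_eigenvalues_eq_zero_iff_eq (hA : A.IsHermitian)
    (hrank : A.rank + 1 = Fintype.card n) : ∃ k, ∀ i, hA.eigenvalues i = 0 ↔ i = k := by
  have card_ne_zero : (univ.filter fun i ↦ ¬ hA.eigenvalues i = 0).card = A.rank := by
    rw [hA.rank_eq_card_non_zero_eigs, Fintype.card_subtype]
  have card_add := card_filter_add_card_filter_not (s := univ) fun i ↦ hA.eigenvalues i = 0
  rw [card_ne_zero, card_univ, ← hrank, add_comm, add_left_cancel_iff, card_eq_one] at card_add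
  obtain ⟨k, hk⟩ := card_add
  exact ⟨k, fun i ↦ by simpa using Finset.ext_iff.1 hk i⟩

theorem prod_eigenvalues_ne_zero_eq_trace_adjugate (hA : A.IsHermitian)
    (hrank : A.rank + 1 = Fintype.card n) :
    ∏ i with hA.eigenvalues i ≠ 0, (hA.eigenvalues i : 𝕜) = A.adjugate.trace := by
  obtain ⟨k, hk⟩ := exists_eigenvalues_eq_zero_iff_eq hA hrank
  have index : univ.filter (fun i ↦ hA.eigenvalues i ≠ 0) = univ.erase k := by
    ext i
    simp [hk]
  rw [trace_adjugate_eq_sum_prod_eigenvalues hA, index]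
  symm
  refine sum_eq_single_of_mem k (mem_univ k) fun i _ hik ↦ ?_
  refine prod_eq_zero (mem_erase.2 ⟨hik.symm, mem_univ k⟩) ?_
  rw [(hk k).2 rfl, RCLike.ofReal_zero]

end Spectral

theorem stmt2_general {V : Type*} [Fintype V] [DecidableEq V] (G : SimpleGraph V)
    [DecidableRel G.Adj] (hconn : G.Connected) (hL : (G.lapMatrix ℝ).IsHermitian) :
    ∏ i with hL.eigenvalues i ≠ 0, hL.eigenvalues i =
      (Fintype.card V : ℝ) * ((spanningTrees G).ncard : ℝ) := by
  have one_component : Nat.card G.ConnectedComponent = 1 :=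
    Nat.card_eq_one_iff_unique.2
      ⟨hconn.preconnected.subsingleton_connectedComponent,
        hconn.nonempty.map G.connectedComponentMk⟩
  have hrank : (G.lapMatrix ℝ).rank + 1 = Fintype.card V :=
    one_component ▸ rank_lapMatrix_add_card_connectedComponent G
  calc
    ∏ i with hL.eigenvalues i ≠ 0, hL.eigenvalues i = (G.lapMatrix ℝ).adjugate.trace :=
      prod_eigenvalues_ne_zero_eq_trace_adjugate hL hrank
    _ = ∑ _ : V, ((spanningTrees G).ncard : ℝ) :=
      sum_congr rfl fun r _ ↦ adjugate_lapMatrix_apply_self_eq_ncard_spanningTrees G ℝ r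
    _ = (Fintype.card V : ℝ) * ((spanningTrees G).ncard : ℝ) := by
      rw [sum_const, card_univ, nsmul_eq_mul]

/-- **The classical matrix tree theorem (Kirchhoff).**
For a connected simple graph `G` on `n` vertices with `s` spanning trees, the
product of the nonzero eigenvalues (with multiplicity) of the Laplacian of `G`
equals `n · s`. -/
theorem stmt2 (n : ℕ) (G : SimpleGraph (Fin n)) [DecidableRel G.Adj]
    (hconn : G.Connected)
    (s : ℕ)
    (hs : {T : Finset (Sym2 (Fin n)) | (T : Set (Sym2 (Fin n))) ⊆ G.edgeSet ∧
        (SimpleGraph.fromEdgeSet (T : Set (Sym2 (Fin n)))).IsTree}.ncard = s)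
    (hL : (SimpleGraph.lapMatrix ℝ G).IsHermitian) :
    ∏ i ∈ Finset.univ.filter (fun i => hL.eigenvalues i ≠ 0), hL.eigenvalues i
      = (n : ℝ) * (s : ℝ) := by
  rw [← hs, stmt2_general G hconn hL, Fintype.card_fin]
  rfl
end

section
/- Let M be a d×n integer matrix of rank r all of whose r×r minors lie in {-1,0,1} (a unimodular matrix). Then the subgroup of ℤⁿ generated by the rows of M equals the subgroup of ℤⁿ generated by the elementary vectors of the real row space of M. -/
/-- A vector `v` is an elementary vector of a subspace `W ⊆ ℝⁿ` if it is a
nonzero vector of `W` with all coordinates in `{-1,0,1}` whose support is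
minimal (w.r.t. inclusion) among supports of nonzero vectors of `W`. -/
def IsElementaryVec {n : ℕ} (W : Submodule ℝ (Fin n → ℝ)) (v : Fin n → ℝ) : Prop :=
  v ∈ W ∧ v ≠ 0 ∧ (∀ i, v i ∈ ({-1, 0, 1} : Set ℝ)) ∧
    ∀ w ∈ W, w ≠ 0 → {i | w i ≠ 0} ⊆ {i | v i ≠ 0} → {i | w i ≠ 0} = {i | v i ≠ 0}

/-!
Choose rows forming a basis of the row space `W` and columns for which the resulting square
submatrix `B` of `M` is invertible. Multiplying the chosen rows by `B⁻¹` gives a matrix `N` with an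
identity block. Its entries are, by Cramer's rule, quotients of maximal minors of `M`, so they lie
in `{-1, 0, 1}`; the identity block then makes the rows of `N` elementary vectors and shows that
every integral point of `W` is an integral combination of them. Since `det B = ±1`, the matrix
`B⁻¹` is integral, so the rows of `N` are also integral combinations of the rows of `M`. Thus both
subgroups equal the group of integral points of `W`.
-/

section RowSpace

open Matrix Module Submodule
open scoped Ring

variable {ι κ m : Type*}

section CommRing

variable {R : Type*} [CommRing R]

/-- The points of a submodule `W` of `R ^ m` all of whose coordinates are images of integers. -/
def integralPoints (W : Submodule R (m → R)) : AddSubgroup (m → R) :=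
  W.toAddSubgroup ⊓ AddSubgroup.pi Set.univ fun _ => (Int.castRingHom R).range.toAddSubgroup

/-- Elementary vectors of a submodule of `R ^ m`, for an arbitrary commutative ring `R` and index
type `m`. For `R = ℝ` and `m = Fin n` this unfolds to `IsElementaryVec`. -/
def IsElementaryVector (W : Submodule R (m → R)) (v : m → R) : Prop :=
  v ∈ W ∧ v ≠ 0 ∧ (∀ i, v i ∈ ({-1, 0, 1} : Set R)) ∧
    ∀ w ∈ W, w ≠ 0 → {i | w i ≠ 0} ⊆ {i | v i ≠ 0} → {i | w i ≠ 0} = {i | v i ≠ 0}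

theorem mem_integralPoints {W : Submodule R (m → R)} {w : m → R} :
    w ∈ integralPoints W ↔ w ∈ W ∧ ∀ j, w j ∈ (Int.castRingHom R).range := by
  simp [integralPoints, AddSubgroup.mem_pi]

theorem mem_range_intCast_of_mem_signs {x : R} (hx : x ∈ ({-1, 0, 1} : Set R)) :
    x ∈ (Int.castRingHom R).range := by
  rcases hx with rfl | rfl | rfl
  exacts [neg_mem (one_mem _), zero_mem _, one_mem _]

theorem mul_mem_signs {x y : R} (hx : x ∈ ({-1, 0, 1} : Set R)) (hy : y ∈ ({-1, 0, 1} : Set R)) :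
    x * y ∈ ({-1, 0, 1} : Set R) := by
  rcases hx with rfl | rfl | rfl <;> rcases hy with rfl | rfl | rfl <;> simp

theorem IsElementaryVector.mem_integralPoints {W : Submodule R (m → R)} {v : m → R}
    (hv : IsElementaryVector W v) : v ∈ integralPoints W :=
  _root_.mem_integralPoints.2 ⟨hv.1, fun j => mem_range_intCast_of_mem_signs (hv.2.2.1 j)⟩

section Fintype

variable [Fintype κ]

theorem vecMul_mem_addSubgroup {S : AddSubgroup (m → R)} {c : κ → R} {A : Matrix κ m R}
    (hc : ∀ k, c k ∈ (Int.castRingHom R).range) (hA : ∀ k, A k ∈ S) : c ᵥ* A ∈ S := by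
  rw [vecMul_eq_sum]
  refine S.sum_mem fun k _ => ?_
  obtain ⟨z, hz⟩ := hc k
  rw [← hz, eq_intCast, Int.cast_smul_eq_zsmul]
  exact S.zsmul_mem (hA k) z

theorem mem_span_range_row_iff {A : Matrix κ m R} {w : m → R} :
    w ∈ span R (Set.range A.row) ↔ ∃ c, c ᵥ* A = w := by
  rw [← range_vecMulLinear, LinearMap.mem_range]; rfl

theorem span_range_row_mul_le (P : Matrix ι κ R) (A : Matrix κ m R) :
    span R (Set.range (P * A).row) ≤ span R (Set.range A.row) := by
  rw [span_le]
  rintro _ ⟨i, rfl⟩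
  exact mem_span_range_row_iff.2 ⟨P i, (mul_apply_eq_vecMul P A i).symm⟩

variable [DecidableEq κ]

theorem span_range_row_mul_of_isUnit {P : Matrix κ κ R} (hP : IsUnit P) (A : Matrix κ m R) :
    span R (Set.range (P * A).row) = span R (Set.range A.row) := by
  refine (span_range_row_mul_le P A).antisymm ?_
  have hPA : P⁻¹ * (P * A) = A :=
    nonsing_inv_mul_cancel_left P A ((isUnit_iff_isUnit_det P).1 hP)
  simpa only [hPA] using span_range_row_mul_le P⁻¹ (P * A)

theorem inv_apply_mem_subring {S : Subring R} {B : Matrix κ κ R}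
    (hB : ∀ i j, B i j ∈ S) (hdet : B.det⁻¹ʳ ∈ S) (i j : κ) : B⁻¹ i j ∈ S := by
  let B' : Matrix κ κ S := of fun i j => ⟨B i j, hB i j⟩
  have hadj : S.subtype.mapMatrix B'.adjugate = B.adjugate := S.subtype.map_adjugate B'
  rw [inv_def, ← hadj]
  exact S.mul_mem hdet (B'.adjugate i j).2

theorem inv_submatrix_mul_apply (A : Matrix κ m R) (g : κ → m) (k : κ) (j : m) :
    ((A.submatrix id g)⁻¹ * A) k j =
      (A.submatrix id g).det⁻¹ʳ * (A.submatrix id (Function.update g k j)).det := by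
  have hcol : (A.submatrix id g).updateCol k (A.col j) =
      A.submatrix id (Function.update g k j) := by
    ext i l
    obtain rfl | hl := eq_or_ne l k <;> simp [*]
  calc ((A.submatrix id g)⁻¹ * A) k j = ((A.submatrix id g)⁻¹ *ᵥ A.col j) k := rfl
    _ = (A.submatrix id g).det⁻¹ʳ * (A.submatrix id (Function.update g k j)).det := by
      rw [inv_def, smul_mulVec, ← cramer_eq_adjugate_mulVec, Pi.smul_apply,
        cramer_apply, hcol, smul_eq_mul]

theorem det_submatrix_id_mem_signs {A : Matrix κ m R}
    (hA : ∀ g : κ → m, g.Injective → (A.submatrix id g).det ∈ ({-1, 0, 1} : Set R))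
    (g : κ → m) : (A.submatrix id g).det ∈ ({-1, 0, 1} : Set R) := by
  by_cases hg : g.Injective
  · exact hA g hg
  · obtain ⟨a, b, hab, hne⟩ := Function.not_injective_iff.1 hg
    simp [det_zero_of_column_eq hne (M := A.submatrix id g) (by simp [hab])]

end Fintype

section IdentityBlock

variable [DecidableEq κ] {N : Matrix κ m R} {g : κ → m}

theorem vecMul_comp_eq_self_of_mem_span [Fintype κ] (hN : N.submatrix id g = 1) {w : m → R}
    (hw : w ∈ span R (Set.range N.row)) : (w ∘ g) ᵥ* N = w := by
  obtain ⟨c, rfl⟩ := mem_span_range_row_iff.1 hw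
  have hc : (c ᵥ* N) ∘ g = c := (congrArg (c ᵥ* ·) hN).trans (vecMul_one c)
  rw [hc]

theorem eq_smul_row_of_support_subset [Finite κ] (hN : N.submatrix id g = 1) {w : m → R}
    (hw : w ∈ span R (Set.range N.row)) {k : κ}
    (hsupp : {j | w j ≠ 0} ⊆ {j | N k j ≠ 0}) : w = w (g k) • N k := by
  have := Fintype.ofFinite κ
  have hwg : w ∘ g = Pi.single k (w (g k)) := by
    ext l
    obtain rfl | hl := eq_or_ne l k
    · simp
    · have hNkl : N k (g l) = 0 := (congrFun₂ hN k l).trans (one_apply_ne' hl)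
      rw [Pi.single_eq_of_ne hl]
      exact of_not_not fun h => hsupp h hNkl
  calc w = (w ∘ g) ᵥ* N := (vecMul_comp_eq_self_of_mem_span hN hw).symm
    _ = w (g k) • N k := by rw [hwg, single_vecMul]; rfl

theorem isElementaryVector_row [IsDomain R] [Finite κ] (hN : N.submatrix id g = 1)
    {k : κ} (hsign : ∀ j, N k j ∈ ({-1, 0, 1} : Set R)) :
    IsElementaryVector (span R (Set.range N.row)) (N k) := by
  have hone : N k (g k) = 1 := (congrFun₂ hN k k).trans (one_apply_eq k)
  refine ⟨subset_span ⟨k, rfl⟩, fun h => ?_, hsign, fun w hw hw0 hsupp => ?_⟩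
  · simp [h] at hone
  · have hwk := eq_smul_row_of_support_subset hN hw hsupp
    have hne : w (g k) ≠ 0 := fun h => hw0 (by rw [hwk, h, zero_smul])
    rw [hwk]
    ext j
    simp [hne]

theorem closure_eq_integralPoints [Finite κ] (hN : N.submatrix id g = 1) {s : Set (m → R)}
    (hs : s ⊆ integralPoints (span R (Set.range N.row)))
    (hNs : ∀ k, N k ∈ AddSubgroup.closure s) :
    AddSubgroup.closure s = integralPoints (span R (Set.range N.row)) := by
  have := Fintype.ofFinite κ
  refine ((AddSubgroup.closure_le _).2 hs).antisymm fun w hw => ?_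
  obtain ⟨hwspan, hwint⟩ := mem_integralPoints.1 hw
  rw [← vecMul_comp_eq_self_of_mem_span hN hwspan]
  exact vecMul_mem_addSubgroup (fun k => hwint (g k)) hNs

end IdentityBlock

end CommRing

theorem inv_mem_signs {K : Type*} [DivisionRing K] {x : K}
    (hx : x ∈ ({-1, 0, 1} : Set K)) : x⁻¹ ∈ ({-1, 0, 1} : Set K) := by
  rcases hx with rfl | rfl | rfl <;> simp

theorem exists_linearIndependent_comp_span_eq [Fintype κ] {K V : Type*} [DivisionRing K]
    [AddCommGroup V] [Module K V] (v : ι → V) [FiniteDimensional K (span K (Set.range v))]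
    (hv : finrank K (span K (Set.range v)) = Fintype.card κ) :
    ∃ f : κ → ι, LinearIndependent K (v ∘ f) ∧
      span K (Set.range (v ∘ f)) = span K (Set.range v) := by
  obtain ⟨u, hu, hspan, hli⟩ := exists_fun_fin_finrank_span_eq K (Set.range v)
  choose f hf using hu
  obtain rfl : v ∘ f = u := funext hf
  let e : κ ≃ Fin (finrank K (span K (Set.range v))) := Fintype.equivFinOfCardEq hv.symm
  refine ⟨f ∘ e, hli.comp e e.injective, ?_⟩
  rw [← Function.comp_assoc, e.surjective.range_comp, hspan]

section Field

variable {K : Type*} [Field K] [Fintype κ] [DecidableEq κ]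

theorem exists_isUnit_submatrix_id {A : Matrix κ m K} (hA : LinearIndependent K A.row) :
    ∃ g : κ → m, IsUnit (A.submatrix id g) := by
  have hspan : span K (Set.range A.col) = ⊤ := span_flip_eq_top_iff_linearIndependent.2 hA
  obtain ⟨g, hg, -⟩ := exists_linearIndependent_comp_span_eq (κ := κ) A.col
    (by rw [hspan, finrank_top, finrank_pi])
  exact ⟨g, linearIndependent_cols_iff_isUnit.1 hg⟩

theorem exists_submatrix_eq_one_of_det_mem_signs {A : Matrix κ m K}
    (hint : ∀ k j, A k j ∈ (Int.castRingHom K).range) (hli : LinearIndependent K A.row)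
    (hdet : ∀ g : κ → m, g.Injective → (A.submatrix id g).det ∈ ({-1, 0, 1} : Set K)) :
    ∃ (g : κ → m) (N : Matrix κ m K), N.submatrix id g = 1 ∧
      (∀ k j, N k j ∈ ({-1, 0, 1} : Set K)) ∧
      span K (Set.range N.row) = span K (Set.range A.row) ∧
      ∀ k, N k ∈ AddSubgroup.closure (Set.range A.row) := by
  obtain ⟨g, hg⟩ := exists_isUnit_submatrix_id hli
  set B := A.submatrix id g
  have hdetB : B.det⁻¹ʳ ∈ ({-1, 0, 1} : Set K) :=
    Ring.inverse_eq_inv B.det ▸ inv_mem_signs (det_submatrix_id_mem_signs hdet g)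
  have hinv : ∀ i j, B⁻¹ i j ∈ (Int.castRingHom K).range :=
    inv_apply_mem_subring (fun i j => hint i (g j)) (mem_range_intCast_of_mem_signs hdetB)
  refine ⟨g, B⁻¹ * A, ?_, fun k j => ?_,
    span_range_row_mul_of_isUnit (isUnit_nonsing_inv_iff.2 hg) A, fun k => ?_⟩
  · exact nonsing_inv_mul B ((isUnit_iff_isUnit_det B).1 hg)
  · rw [inv_submatrix_mul_apply]
    exact mul_mem_signs hdetB (det_submatrix_id_mem_signs hdet _)
  · rw [mul_apply_eq_vecMul]
    exact vecMul_mem_addSubgroup (hinv k) fun l => AddSubgroup.subset_closure ⟨l, rfl⟩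

theorem stmt6_general (M : Matrix ι m K) (f : κ → ι)
    (hint : ∀ i j, M i j ∈ (Int.castRingHom K).range)
    (hli : LinearIndependent K (M.row ∘ f))
    (hspan : span K (Set.range (M.row ∘ f)) = span K (Set.range M.row))
    (huni : ∀ g : κ → m, g.Injective → (M.submatrix f g).det ∈ ({-1, 0, 1} : Set K)) :
    AddSubgroup.closure (Set.range M.row) =
      AddSubgroup.closure {v | IsElementaryVector (span K (Set.range M.row)) v} := by
  obtain ⟨g, N, hN, hsign, hNspan, hNmem⟩ :=
    exists_submatrix_eq_one_of_det_mem_signs (A := M.submatrix f id) (fun k => hint (f k)) hli huni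
  have hW : span K (Set.range N.row) = span K (Set.range M.row) := hNspan.trans hspan
  have hrows : Set.range M.row ⊆ integralPoints (span K (Set.range N.row)) := by
    rintro _ ⟨i, rfl⟩
    exact mem_integralPoints.2 ⟨hW ▸ subset_span ⟨i, rfl⟩, hint i⟩
  have hNrows (k : κ) : N k ∈ AddSubgroup.closure (Set.range M.row) :=
    AddSubgroup.closure_mono (Set.range_comp_subset_range f M.row) (hNmem k)
  rw [closure_eq_integralPoints hN hrows hNrows, ← hW,
    closure_eq_integralPoints hN (fun _ hv => hv.mem_integralPoints)
      fun k => AddSubgroup.subset_closure (isElementaryVector_row hN (hsign k))]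

end Field

end RowSpace

/-- For a rank `r` unimodular integer matrix `M`, the subgroup of `ℤⁿ`
generated by the rows of `M` coincides with the subgroup generated by the
elementary vectors (cocircuits) of the real row space of `M`. -/
theorem stmt6 (d n r : ℕ) (M : Matrix (Fin d) (Fin n) ℝ)
    (hint : ∀ i j, ∃ z : ℤ, M i j = (z : ℝ))
    (hrank : M.rank = r)
    (huni : ∀ (f : Fin r → Fin d) (g : Fin r → Fin n),
      Function.Injective f → Function.Injective g →
      (M.submatrix f g).det ∈ ({-1, 0, 1} : Set ℝ)) :
    AddSubgroup.closure (Set.range (fun i => M i)) =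
      AddSubgroup.closure
        {v : Fin n → ℝ | IsElementaryVec (Submodule.span ℝ (Set.range (fun i => M i))) v} := by
  obtain ⟨f, hli, hspan⟩ := exists_linearIndependent_comp_span_eq (κ := Fin r) M.row
    (by rw [← M.rank_eq_finrank_span_row, hrank, Fintype.card_fin])
  exact stmt6_general M f (fun i j => (hint i j).imp fun _ => Eq.symm) hli hspan
    fun g hg => huni f g hli.injective.of_comp hg
end

section
/- Let M be a d×n integer matrix of full row rank d all of whose d×d minors lie in {-1,0,1} (a unimodular matrix), and let D be an n×n diagonal matrix with nonnegative integer diagonal entries. Then the Lebesgue volume of the zonotope Z(M·D) equals the Lebesgue volume of the zonotope Z(M·D·Mᵀ). -/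
open MeasureTheory

/-!
The volume of a zonotope `∑ i, [0, v i]` in `ℝ^d` is the sum of the volumes of the parallelepipeds
spanned by `d` of its generators. Indeed, for a convex body `K`, cutting `K + [0, (a + b) u]` into
`K + [0, a u]` and a translate of `K + [0, b u]`, which overlap in a translate of `K`, shows that
`t ↦ vol (∑ i, [0, t i • v i])` is affine in each `t i ∈ ℕ`. It is also homogeneous of degree `d`,
so only its squarefree monomials of degree `d` survive, and their coefficients are the values at
indicator vectors of `d`-subsets.

Hence `vol Z(MD) = ∑ |det M_S| ∏_{i ∈ S} D i i` over the `d`-subsets `S` of the columns. On the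
other side `vol Z(MDMᵀ) = |det (MDMᵀ)|`, which is `∑ (det M_S)² ∏_{i ∈ S} D i i` by the
Cauchy–Binet formula. The two sums agree term by term when every `det M_S` is `0` or `±1`.

Cauchy–Binet itself comes from comparing coefficients of `X^d` in
`det (1 + X • AB) = det (1 + X • BA)`, since these are sums of principal minors.
-/

open Finset Function Module Matrix Polynomial
open scoped Pointwise

section Multiaffine

variable {ι R : Type*} [DecidableEq ι] [CommRing R] {f : (ι → ℕ) → R}

/-- A function on `ℕ^ι` is multiaffine if it is affine in each coordinate when the others are
fixed; equivalently, it is a polynomial of degree at most one in each coordinate. -/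
def IsMultiaffine (f : (ι → ℕ) → R) : Prop :=
  ∀ t i (k : ℕ), f (update t i k) =
    f (update t i 0) + k * (f (update t i 1) - f (update t i 0))

namespace IsMultiaffine

theorem sub_update (hf : IsMultiaffine f) (a : ι) :
    IsMultiaffine fun t ↦ f (update t a 1) - f (update t a 0) := by
  intro t i k
  rcases eq_or_ne i a with rfl | hia
  · simp only [update_idem]
    ring
  · simp only [update_comm hia]
    rw [hf _ i k, hf (update t a 0) i k]
    ring

theorem exists_piecewise_eq_sum (hf : IsMultiaffine f) (U : Finset ι) :
    ∃ c : Finset ι → R, ∀ t,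
      f (U.piecewise t 0) = ∑ S ∈ U.powerset, c S * ∏ i ∈ S, (t i : R) := by
  induction U using Finset.induction_on generalizing f with
  | empty => exact ⟨fun _ ↦ f 0, by simp⟩
  | insert a U ha ih =>
    obtain ⟨c₀, hc₀⟩ := ih hf
    obtain ⟨c₁, hc₁⟩ := ih (hf.sub_update a)
    refine ⟨fun S ↦ if a ∈ S then c₁ (S.erase a) else c₀ S, fun t ↦ ?_⟩
    have hsplit : f ((insert a U).piecewise t 0) = f (U.piecewise t 0) +
        t a * (f (update (U.piecewise t 0) a 1) - f (update (U.piecewise t 0) a 0)) := by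
      have hzero : update (U.piecewise t 0) a 0 = U.piecewise t 0 := by
        simp [update_eq_self_iff, ha]
      rw [piecewise_insert, hf, hzero]
    rw [hsplit, hc₀, hc₁, sum_powerset_insert ha, mul_sum]
    congr 1
    · refine sum_congr rfl fun S hS ↦ ?_
      have haS : a ∉ S := fun haS ↦ ha (mem_powerset.1 hS haS)
      simp only [haS, if_false]
    · refine sum_congr rfl fun S hS ↦ ?_
      have haS : a ∉ S := fun haS ↦ ha (mem_powerset.1 hS haS)
      simp only [mem_insert_self, if_true, erase_insert haS, prod_insert haS]
      ring

end IsMultiaffine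

variable [Fintype ι] [IsDomain R] [CharZero R] {d : ℕ}

theorem sum_powersetCard_eq_of_homogeneous {c : Finset ι → R}
    (hc : ∀ t, f t = ∑ S, c S * ∏ i ∈ S, (t i : R))
    (hhom : ∀ (k : ℕ) t, f (k • t) = k ^ d * f t) (S : Finset ι) :
    ∑ T ∈ S.powersetCard d, c T = f (S.piecewise 1 0) := by
  have hray (k : ℕ) : f (k • (S.piecewise 1 0 : ι → ℕ)) = ∑ T ∈ S.powerset, c T * (k : R) ^ #T := by
    rw [hc, ← sum_subset (subset_univ S.powerset)]
    · refine sum_congr rfl fun T hT ↦ ?_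
      congr 1
      refine prod_eq_pow_card fun i hi ↦ ?_
      simp [mem_powerset.1 hT hi]
    · intro T _ hT
      obtain ⟨i, hiT, hiS⟩ := not_subset.1 (mt mem_powerset.2 hT)
      rw [prod_eq_zero hiT (by simp [hiS]), mul_zero]
  have hpoly : ∑ T ∈ S.powerset, C (c T) * X ^ #T = C (f (S.piecewise 1 0)) * X ^ d := by
    refine eq_of_infinite_eval_eq _ _
      ((Set.infinite_range_of_injective (Nat.cast_injective (R := R))).mono ?_)
    rintro _ ⟨k, rfl⟩
    simp only [Set.mem_ofPred_eq, eval_finsetSum, eval_mul, eval_C, eval_pow, eval_X]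
    rw [← hray, hhom, mul_comm]
  have hcoeff := congrArg (coeff · d) hpoly
  simpa [finsetSum_coeff, coeff_X_pow, powersetCard_eq_filter, sum_filter, eq_comm] using hcoeff

theorem IsMultiaffine.apply_one_eq_sum_powersetCard (hf : IsMultiaffine f)
    (hhom : ∀ (k : ℕ) t, f (k • t) = k ^ d * f t) :
    f 1 = ∑ S ∈ univ.powersetCard d, f (S.piecewise 1 0) := by
  obtain ⟨c, hc⟩ := hf.exists_piecewise_eq_sum univ
  simp only [piecewise_univ, powerset_univ] at hc
  have hsum := sum_powersetCard_eq_of_homogeneous hc hhom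
  calc f 1 = ∑ S ∈ univ.powersetCard d, c S := by simp [hsum]
    _ = ∑ S ∈ univ.powersetCard d, f (S.piecewise 1 0) := by
      refine sum_congr rfl fun S hS ↦ ?_
      rw [← hsum S, ← (mem_powersetCard.1 hS).2, powersetCard_self, sum_singleton]

end Multiaffine

section AddSegment

variable {E : Type*} [AddCommGroup E] [Module ℝ E] {K : Set E} {u x : E} {a b : ℝ}

theorem mem_add_segment_zero_smul (ha : 0 ≤ a) :
    x ∈ K + segment ℝ 0 (a • u) ↔ ∃ s ∈ Set.Icc 0 a, x - s • u ∈ K := by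
  have hseg : segment ℝ 0 (a • u) = (· • u) '' Set.Icc 0 a := by
    rw [← segment_eq_Icc ha]
    simpa using (image_segment ℝ (LinearMap.toSpanSingleton ℝ E u).toAffineMap 0 a).symm
  rw [hseg, Set.mem_add]
  constructor
  · rintro ⟨p, hp, _, ⟨s, hs, rfl⟩, rfl⟩
    exact ⟨s, hs, by simpa using hp⟩
  · rintro ⟨s, hs, hx⟩
    exact ⟨x - s • u, hx, s • u, ⟨s, hs, rfl⟩, sub_add_cancel x (s • u)⟩

theorem add_segment_union_vadd (ha : 0 ≤ a) (hb : 0 ≤ b) :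
    (K + segment ℝ 0 (a • u)) ∪ (a • u +ᵥ (K + segment ℝ 0 (b • u))) =
      K + segment ℝ 0 ((a + b) • u) := by
  ext x
  simp only [Set.mem_union, Set.mem_vadd_set_iff_neg_vadd_mem, mem_add_segment_zero_smul ha,
    mem_add_segment_zero_smul hb, mem_add_segment_zero_smul (add_nonneg ha hb)]
  constructor
  · rintro (⟨s, hs, hx⟩ | ⟨s, hs, hx⟩)
    · exact ⟨s, ⟨hs.1, by linarith [hs.2]⟩, hx⟩
    · refine ⟨a + s, ⟨by linarith [hs.1], by linarith [hs.2]⟩, ?_⟩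
      convert hx using 1
      rw [vadd_eq_add]
      module
  · rintro ⟨s, hs, hx⟩
    rcases le_total s a with hsa | has
    · exact .inl ⟨s, ⟨hs.1, hsa⟩, hx⟩
    · refine .inr ⟨s - a, ⟨by linarith, by linarith [hs.2]⟩, ?_⟩
      convert hx using 1
      rw [vadd_eq_add]
      module

theorem add_segment_inter_vadd (hK : Convex ℝ K) (ha : 0 ≤ a) (hb : 0 ≤ b) :
    (K + segment ℝ 0 (a • u)) ∩ (a • u +ᵥ (K + segment ℝ 0 (b • u))) = a • u +ᵥ K := by
  ext x
  simp only [Set.mem_inter_iff, Set.mem_vadd_set_iff_neg_vadd_mem, vadd_eq_add,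
    mem_add_segment_zero_smul ha, mem_add_segment_zero_smul hb]
  constructor
  · rintro ⟨⟨s, hs, hxs⟩, r, hr, hxr⟩
    have hline (c : ℝ) : AffineMap.lineMap x (x - u) c = x - c • u := by
      rw [AffineMap.lineMap_apply_module]
      module
    have hconn := (hK.affine_preimage (AffineMap.lineMap (k := ℝ) x (x - u))).ordConnected
    -- `c ↦ x - c • u` lies in the convex set `K` at `c = s ≤ a` and at `c = a + r ≥ a`.
    have hxa : a ∈ AffineMap.lineMap x (x - u) ⁻¹' K := by
      refine hconn.out (x := s) (y := a + r) ?_ ?_ ⟨hs.2, by linarith [hr.1]⟩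
      · rwa [Set.mem_preimage, hline]
      · rw [Set.mem_preimage, hline]
        convert hxr using 1
        module
    rwa [Set.mem_preimage, hline, sub_eq_neg_add] at hxa
  · intro hx
    exact ⟨⟨a, ⟨ha, le_rfl⟩, by simpa [sub_eq_neg_add] using hx⟩,
      0, ⟨le_rfl, hb⟩, by simpa using hx⟩

end AddSegment

section Parallelepiped

variable {E ι : Type*} [AddCommGroup E] [Module ℝ E] [Fintype ι]

theorem parallelepiped_update [DecidableEq ι] (v : ι → E) (i : ι) (u : E) :
    parallelepiped (update v i u) = parallelepiped (update v i 0) + segment ℝ 0 u := by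
  simp only [parallelepiped_eq_sum_segment, apply_update (fun _ ↦ segment ℝ (0 : E)),
    sum_update_of_mem (mem_univ i), segment_same, Set.singleton_zero, zero_add]
  rw [add_comm]

theorem parallelepiped_piecewise_zero [DecidableEq ι] (v : ι → E) (S : Finset ι) :
    parallelepiped (S.piecewise v 0) = parallelepiped fun i : S ↦ v i := by
  simp only [parallelepiped_eq_sum_segment]
  rw [sum_coe_sort S fun i ↦ segment ℝ 0 (v i), ← sum_subset (subset_univ S)]
  · refine sum_congr rfl fun i hi ↦ ?_
    rw [piecewise_eq_of_mem _ _ _ hi]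
  · intro i _ hi
    rw [piecewise_eq_of_notMem _ _ _ hi, Pi.zero_apply, segment_same, Set.singleton_zero]

variable [TopologicalSpace E] [IsTopologicalAddGroup E] [ContinuousSMul ℝ E]

theorem isCompact_segment (x y : E) : IsCompact (segment ℝ x y) := by
  rw [segment_eq_image]
  exact isCompact_Icc.image (by fun_prop)

theorem isCompact_parallelepiped (v : ι → E) : IsCompact (parallelepiped v) :=
  isCompact_Icc.image (by fun_prop)

end Parallelepiped

section ZonotopeVolume

variable {E ι : Type*} [NormedAddCommGroup E] [NormedSpace ℝ E] [FiniteDimensional ℝ E]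
  [MeasurableSpace E] [BorelSpace E] [Fintype ι] (μ : Measure E) [μ.IsAddHaarMeasure]

theorem measureReal_add_segment_add {K : Set E} (hK : Convex ℝ K) (hKc : IsCompact K) (u : E)
    {a b : ℝ} (ha : 0 ≤ a) (hb : 0 ≤ b) :
    μ.real (K + segment ℝ 0 ((a + b) • u)) + μ.real K =
      μ.real (K + segment ℝ 0 (a • u)) + μ.real (K + segment ℝ 0 (b • u)) := by
  have hcompact (c : ℝ) : IsCompact (K + segment ℝ 0 (c • u)) := hKc.add (isCompact_segment _ _)
  have hvadd (s : Set E) : μ.real (a • u +ᵥ s) = μ.real s := by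
    simp only [measureReal_def, measure_vadd]
  calc μ.real (K + segment ℝ 0 ((a + b) • u)) + μ.real K
      = μ.real ((K + segment ℝ 0 (a • u)) ∪ (a • u +ᵥ (K + segment ℝ 0 (b • u)))) +
          μ.real ((K + segment ℝ 0 (a • u)) ∩ (a • u +ᵥ (K + segment ℝ 0 (b • u)))) := by
        rw [add_segment_union_vadd ha hb, add_segment_inter_vadd hK ha hb, hvadd]
    _ = μ.real (K + segment ℝ 0 (a • u)) + μ.real (a • u +ᵥ (K + segment ℝ 0 (b • u))) :=
        measureReal_union_add_inter ((hcompact b).vadd (a • u)).measurableSet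
          (hcompact a).measure_ne_top ((hcompact b).vadd (a • u)).measure_ne_top
    _ = μ.real (K + segment ℝ 0 (a • u)) + μ.real (K + segment ℝ 0 (b • u)) := by rw [hvadd]

theorem measureReal_add_segment_nsmul {K : Set E} (hK : Convex ℝ K) (hKc : IsCompact K) (u : E)
    (k : ℕ) :
    μ.real (K + segment ℝ 0 (k • u)) =
      μ.real K + k * (μ.real (K + segment ℝ 0 u) - μ.real K) := by
  induction k with
  | zero => simp
  | succ k ih =>
    have hadd := measureReal_add_segment_add μ hK hKc u k.cast_nonneg zero_le_one
    rw [one_smul, ← Nat.cast_succ, Nat.cast_smul_eq_nsmul, Nat.cast_smul_eq_nsmul] at hadd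
    push_cast
    linarith

theorem isMultiaffine_measureReal_parallelepiped [DecidableEq ι] (v : ι → E) :
    IsMultiaffine fun t : ι → ℕ ↦ μ.real (parallelepiped fun i ↦ t i • v i) := by
  intro t i k
  simp only [apply_update (fun j (m : ℕ) ↦ m • v j)]
  rw [parallelepiped_update, parallelepiped_update _ i (1 • v i), zero_smul, one_smul]
  exact measureReal_add_segment_nsmul μ (convex_parallelepiped _) (isCompact_parallelepiped _)
    (v i) k

theorem measureReal_parallelepiped_nsmul (k : ℕ) (v : ι → E) :
    μ.real (parallelepiped (k • v)) = k ^ finrank ℝ E * μ.real (parallelepiped v) := by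
  have himage : parallelepiped (k • v) = (k : ℝ) • parallelepiped v := by
    rw [← Nat.cast_smul_eq_nsmul ℝ]
    exact (image_parallelepiped (LinearMap.lsmul ℝ E (k : ℝ)) v).symm
  rw [himage, measureReal_def, Measure.addHaar_smul_of_nonneg μ k.cast_nonneg, ENNReal.toReal_mul,
    ENNReal.toReal_ofReal (by positivity), measureReal_def]

theorem measureReal_parallelepiped_eq_sum (v : ι → E) :
    μ.real (parallelepiped v) =
      ∑ S ∈ (univ : Finset ι).powersetCard (finrank ℝ E),
        μ.real (parallelepiped fun i : S ↦ v i) := by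
  classical
  have hhom (k : ℕ) (t : ι → ℕ) : μ.real (parallelepiped fun i ↦ (k • t) i • v i) =
      k ^ finrank ℝ E * μ.real (parallelepiped fun i ↦ t i • v i) := by
    rw [← measureReal_parallelepiped_nsmul]
    congr with i
    simp [mul_smul]
  have hsum := (isMultiaffine_measureReal_parallelepiped μ v).apply_one_eq_sum_powersetCard hhom
  simp only [Pi.one_apply, one_smul] at hsum
  rw [hsum]
  refine sum_congr rfl fun S _ ↦ ?_
  rw [← parallelepiped_piecewise_zero]
  congr with i
  by_cases hi : i ∈ S <;> simp [hi]

end ZonotopeVolume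

section Minors

variable {ι κ R : Type*} [Fintype ι] [Fintype κ] [DecidableEq κ] [CommRing R] {d : ℕ}

theorem det_submatrix_mul_diagonal [DecidableEq ι] (M : Matrix κ ι R) (w : ι → R) (e : κ → ι) :
    ((M * diagonal w).submatrix id e).det = (∏ j, w (e j)) * (M.submatrix id e).det := by
  rw [← det_mul_row]
  congr 1
  ext i j
  simp [mul_comm]

theorem sum_principal_minors_mul_comm [DecidableEq ι] (A : Matrix κ ι R) (B : Matrix ι κ R)
    (k : ℕ) :
    ∑ S ∈ (univ : Finset κ).powersetCard k,
        ((A * B).submatrix (Subtype.val : S → κ) Subtype.val).det =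
      ∑ S ∈ (univ : Finset ι).powersetCard k,
        ((B * A).submatrix (Subtype.val : S → ι) Subtype.val).det := by
  rw [← coeff_det_one_add_X_smul_eq_sum_minors, ← coeff_det_one_add_X_smul_eq_sum_minors,
    Matrix.map_mul, Matrix.map_mul, ← Matrix.smul_mul, det_one_add_mul_comm, Matrix.mul_smul]

variable [LinearOrder ι]

theorem sum_powersetCard_eq_sum_orderEmbedding {M : Type*} [AddCommMonoid M]
    {g : Finset ι → M} {h : (Fin d ↪o ι) → M}
    (hgh : ∀ (S : Finset ι) (φ : Fin d ≃o S),
      g S = h (φ.toOrderEmbedding.trans (OrderEmbedding.subtype (· ∈ S)))) :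
    ∑ S ∈ univ.powersetCard d, g S = ∑ e, h e := by
  classical
  calc ∑ S ∈ univ.powersetCard d, g S = ∑ S : Set.powersetCard ι d, g S :=
        sum_subtype _ (fun S ↦ by simp [Set.powersetCard.mem_iff]) g
    _ = ∑ S : Set.powersetCard ι d, h (Set.powersetCard.ofFinEmbEquiv.symm S) :=
        sum_congr rfl fun S _ ↦ hgh S (S.1.orderIsoOfFin S.2)
    _ = ∑ e, h e := Equiv.sum_comp _ h

theorem det_mul_eq_sum_orderEmbedding (A : Matrix (Fin d) ι R) (B : Matrix ι (Fin d) R) :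
    (A * B).det = ∑ e : Fin d ↪o ι, (A.submatrix id e).det * (B.submatrix e id).det := by
  have huniv : (A * B).det = ∑ S ∈ (univ : Finset (Fin d)).powersetCard d,
      ((A * B).submatrix (Subtype.val : S → Fin d) Subtype.val).det := by
    have hS : (univ : Finset (Fin d)).powersetCard d = {univ} := by
      simpa using powersetCard_self (univ : Finset (Fin d))
    rw [hS, sum_singleton, ← det_submatrix_equiv_self (Equiv.subtypeUnivEquiv mem_univ) (A * B)]
    rfl
  rw [huniv, sum_principal_minors_mul_comm]
  refine sum_powersetCard_eq_sum_orderEmbedding fun S φ ↦ ?_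
  rw [mul_comm, ← det_mul, ← det_submatrix_equiv_self φ.toEquiv]
  rfl

theorem det_mul_diagonal_mul_transpose (M : Matrix (Fin d) ι R) (w : ι → R) :
    (M * diagonal w * Mᵀ).det =
      ∑ e : Fin d ↪o ι, (∏ j, w (e j)) * (M.submatrix id e).det ^ 2 := by
  rw [det_mul_eq_sum_orderEmbedding]
  refine sum_congr rfl fun e _ ↦ ?_
  rw [det_submatrix_mul_diagonal, ← transpose_submatrix, det_transpose]
  ring

end Minors

theorem zonotope_eq_parallelepiped {d n : ℕ} (A : Matrix (Fin d) (Fin n) ℝ) :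
    zonotope A = parallelepiped A.col := by
  ext y
  simp only [zonotope, mem_parallelepiped_iff, mulVec_eq_sum, op_smul_eq_smul, Set.mem_ofPred_eq,
    Set.mem_Icc, Pi.le_def, forall_and]
  rfl

theorem volume_real_parallelepiped_col {d : ℕ} (A : Matrix (Fin d) (Fin d) ℝ) :
    volume.real (parallelepiped A.col) = |A.det| := by
  have hdet : (Pi.basisFun ℝ (Fin d)).det A.col = A.det := by
    rw [Pi.basisFun_det, ← det_transpose]
    rfl
  rw [← addHaarMeasure_eq_volume_pi, ← Basis.parallelepiped_basisFun, ← Basis.addHaar_def,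
    measureReal_def, Measure.addHaar_parallelepiped, hdet, ENNReal.toReal_ofReal (abs_nonneg _)]

theorem volume_real_zonotope {d n : ℕ} (A : Matrix (Fin d) (Fin n) ℝ) :
    volume.real (zonotope A) = ∑ e : Fin d ↪o Fin n, |(A.submatrix id e).det| := by
  rw [zonotope_eq_parallelepiped, measureReal_parallelepiped_eq_sum, finrank_fin_fun]
  refine sum_powersetCard_eq_sum_orderEmbedding fun S φ ↦ ?_
  rw [← parallelepiped_comp_equiv _ φ.toEquiv, ← volume_real_parallelepiped_col]
  rfl

theorem volume_zonotope_ne_top {d n : ℕ} (A : Matrix (Fin d) (Fin n) ℝ) :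
    volume (zonotope A) ≠ ⊤ := by
  rw [zonotope_eq_parallelepiped]
  exact (isCompact_parallelepiped _).measure_ne_top

theorem stmt9_general (d n : ℕ) (M : Matrix (Fin d) (Fin n) ℝ)
    (huni : ∀ f : Fin d → Fin n, Function.Injective f →
      (M.submatrix id f).det ∈ ({-1, 0, 1} : Set ℝ))
    (D : Matrix (Fin n) (Fin n) ℝ) (hD : D.IsDiag) (hDnonneg : 0 ≤ D.diag) :
    volume (zonotope (M * D)) = volume (zonotope (M * D * Mᵀ)) := by
  rw [← measureReal_eq_measureReal_iff (volume_zonotope_ne_top _) (volume_zonotope_ne_top _),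
    ← hD.diagonal_diag]
  have hprod (e : Fin d ↪o Fin n) : 0 ≤ ∏ j, D.diag (e j) := prod_nonneg fun j _ ↦ hDnonneg (e j)
  have habs (e : Fin d ↪o Fin n) : |(M.submatrix id e).det| = (M.submatrix id e).det ^ 2 := by
    have hmem := huni e e.injective
    simp only [Set.mem_insert_iff, Set.mem_singleton_iff] at hmem
    rcases hmem with h | h | h <;> norm_num [h]
  calc volume.real (zonotope (M * diagonal D.diag))
      = ∑ e : Fin d ↪o Fin n, (∏ j, D.diag (e j)) * (M.submatrix id e).det ^ 2 := by
        rw [volume_real_zonotope]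
        refine sum_congr rfl fun e _ ↦ ?_
        rw [det_submatrix_mul_diagonal, abs_mul, abs_of_nonneg (hprod e), habs]
    _ = |(M * diagonal D.diag * Mᵀ).det| := by
        rw [det_mul_diagonal_mul_transpose,
          abs_of_nonneg (sum_nonneg fun e _ ↦ mul_nonneg (hprod e) (sq_nonneg _))]
    _ = volume.real (zonotope (M * diagonal D.diag * Mᵀ)) := by
        rw [zonotope_eq_parallelepiped, volume_real_parallelepiped_col]

/-- For a full row rank unimodular integer matrix `M` and a diagonal matrix `D`
with nonnegative integer entries, the Lebesgue volume of `Z(M·D)` equals the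
Lebesgue volume of `Z(M·D·Mᵀ)`. -/
theorem stmt9 (d n : ℕ) (M : Matrix (Fin d) (Fin n) ℝ)
    (hint : ∀ i j, ∃ z : ℤ, M i j = (z : ℝ))
    (hrank : M.rank = d)
    (huni : ∀ f : Fin d → Fin n, Function.Injective f →
      (M.submatrix id f).det ∈ ({-1, 0, 1} : Set ℝ))
    (D : Matrix (Fin n) (Fin n) ℝ)
    (hDdiag : ∀ i j, i ≠ j → D i j = 0)
    (hDnat : ∀ i, ∃ k : ℕ, D i i = (k : ℝ)) :
    volume (zonotope (M * D)) = volume (zonotope (M * D * M.transpose)) :=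
  stmt9_general d n M huni D (fun i j ↦ hDdiag i j) fun i ↦ by
    obtain ⟨k, hk⟩ := hDnat i; simp [hk]
end
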